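/- Let w = x^{a_1}y^{b_1}···x^{a_r}y^{b_r} be a reduced word of prime complexity r and let p be a prime with p > r. If the family of word maps P_{w,q}: SL(2,q) × SL(2,q) → SL(2,q), q = p^n, is not p-equidistributed, then there exist nonzero integers α, β such that w = (x^α y^β)^r. -/

import Mathlib

open Matrix Polynomial

abbrev SL2 (K : Type) [CommRing K] : Type := Matrix.SpecialLinearGroup (Fin 2) K

abbrev PSL2 (K : Type) [CommRing K] : Type := SL2 K ⧸ Subgroup.center (SL2 K)

/-- Evaluation of a word `w ∈ F₂` at a pair of group elements. -/
def wordEval {G : Type*} [Group G] (w : FreeGroup (Fin 2)) (g₁ g₂ : G) : G :=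
  (FreeGroup.lift ![g₁, g₂]) w

/-- The word map `P_{w,G} : G × G → G` for `G = SL(2,K)`. -/
def wordMap (w : FreeGroup (Fin 2)) (K : Type) [CommRing K] :
    SL2 K × SL2 K → SL2 K := fun g => wordEval w g.1 g.2

/-- The point `(tr x, tr xy, tr y)`. -/
def trPoint {K : Type} [CommRing K] (x y : SL2 K) : Fin 3 → K :=
  ![Matrix.trace (x : Matrix (Fin 2) (Fin 2) K),
    Matrix.trace ((x * y : SL2 K) : Matrix (Fin 2) (Fin 2) K),
    Matrix.trace (y : Matrix (Fin 2) (Fin 2) K)]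

/-- `f ∈ ℤ[s,u,t]` is the trace polynomial of the word `w`. -/
def IsTracePolynomial (w : FreeGroup (Fin 2)) (f : MvPolynomial (Fin 3) ℤ) : Prop :=
  ∀ (K : Type) [CommRing K], ∀ x y : SL2 K,
    Matrix.trace ((wordEval w x y : SL2 K) : Matrix (Fin 2) (Fin 2) K) =
      MvPolynomial.eval (trPoint x y) (MvPolynomial.map (Int.castRingHom K) f)

/-- `f : X → Y` is `ε`-equidistributed. -/
def IsEquidistributed {X Y : Type*} (f : X → Y) (ε : ℝ) : Prop :=
  ∃ Y' : Set Y,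
    (1 - ε) * (Nat.card Y) < (Nat.card Y' : ℝ) ∧
    ∀ y ∈ Y',
      |(Nat.card {x : X // f x = y} : ℝ) - (Nat.card X : ℝ) / (Nat.card Y)| <
        ε * (Nat.card X) / (Nat.card Y)

/-- The family of word maps on `SL(2,p^n)` is `p`-equidistributed. -/
def IsPEquidistributed (w : FreeGroup (Fin 2)) (p : ℕ) (hp : p.Prime) : Prop :=
  letI : Fact p.Prime := ⟨hp⟩
  ∃ ε : ℕ → ℝ,
    Filter.Tendsto (fun n : ℕ => ε (p ^ n)) Filter.atTop (nhds 0) ∧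
    ∀ᶠ n : ℕ in Filter.atTop,
      IsEquidistributed (wordMap w (GaloisField p n)) (ε (p ^ n))

/-- The family of word maps on `SL(2,q)`, `q` ranging over all prime powers,
is equidistributed. -/
def IsEquidistributedFamily (w : FreeGroup (Fin 2)) : Prop :=
  ∃ ε : ℕ → ℝ,
    Filter.Tendsto ε Filter.atTop (nhds 0) ∧
    ∀ (p : ℕ) (hp : p.Prime),
      letI : Fact p.Prime := ⟨hp⟩
      ∀ᶠ n : ℕ in Filter.atTop,
        IsEquidistributed (wordMap w (GaloisField p n)) (ε (p ^ n))

/-- Reduction of an integral polynomial mod `p`. -/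
noncomputable def reduceMod (p : ℕ) (P : MvPolynomial (Fin 3) ℤ) : MvPolynomial (Fin 3) (ZMod p) :=
  MvPolynomial.map (Int.castRingHom (ZMod p)) P

/-- `P = h ∘ Q` with `deg Q ≥ 1`, `deg h ≥ 2`. -/
def IsCompositePoly (F : Type) [CommRing F] (P : MvPolynomial (Fin 3) F) : Prop :=
  ∃ (Q : MvPolynomial (Fin 3) F) (h : Polynomial F),
    1 ≤ Q.totalDegree ∧ 2 ≤ h.natDegree ∧ P = Polynomial.aeval Q h

def IsPComposite (p : ℕ) (P : MvPolynomial (Fin 3) ℤ) : Prop :=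
  IsCompositePoly (ZMod p) (reduceMod p P)

/-- `h` is a permutation polynomial of every finite extension of `F_p`. -/
def IsPermAllExt (p : ℕ) (h : Polynomial (ZMod p)) : Prop :=
  ∀ (K : Type) [Field K] [Algebra (ZMod p) K] [Finite K],
    Function.Bijective fun z : K => Polynomial.aeval z h

def IsPSpecial (p : ℕ) (P : MvPolynomial (Fin 3) ℤ) : Prop :=
  IsPComposite p P ∧
    ∃ (Q : MvPolynomial (Fin 3) (ZMod p)) (h : Polynomial (ZMod p)),
      1 ≤ Q.totalDegree ∧ 2 ≤ h.natDegree ∧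
      reduceMod p P = Polynomial.aeval Q h ∧ IsPermAllExt p h

def AlmostNoncomposite (P : MvPolynomial (Fin 3) ℤ) : Prop :=
  ∀ p : ℕ, p.Prime → ¬ IsPComposite p P ∨ IsPSpecial p P

/-- The reduced word `x^{a₁}y^{b₁} ⋯ x^{a_r}y^{b_r}`. -/
def wordOf {r : ℕ} (a b : Fin r → ℤ) : FreeGroup (Fin 2) :=
  (List.ofFn fun i : Fin r =>
    FreeGroup.of (0 : Fin 2) ^ a i * FreeGroup.of (1 : Fin 2) ^ b i).prod

theorem st_max {K L Γ ι : Type*} [Field K] [Finite K] [CommRing L] [Algebra K L]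
    [LinearOrderedCommGroupWithZero Γ] [DecidableEq ι] (v : Valuation L Γ) (X : Γ) (hX : 1 < X) (e : ℕ) (he : e ≠ 0)
    (ω : ι → ℕ) (b : ι → L) (hb : ∀ i, v (b i) ^ e = X ^ ω i) (c : ι → K) (s : Finset ι)
    (hω : Set.InjOn ω s) (hc : ∀ i ∈ s, c i ≠ 0) (j : ι) (hj : j ∈ s) (hmax : ∀ i ∈ s, ω i ≤ ω j) :
    v (∑ i ∈ s, c i • b i) ^ e = X ^ ω j := by
  have hv1 : ∀ c : K, c ≠ 0 → v (algebraMap K L c) = 1 := by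
    intro c hc
    have := Fintype.ofFinite K
    have h1 : c ^ (Fintype.card K - 1) = 1 := FiniteField.pow_card_sub_one_eq_one c hc
    have h2 : v (algebraMap K L c) ^ (Fintype.card K - 1) = 1 := by
      rw [← map_pow, ← map_pow, h1]; simp
    have h3 : Fintype.card K - 1 ≠ 0 := by
      have := Fintype.one_lt_card (α := K); omega
    exact (pow_eq_one_iff_of_nonneg zero_le h3).1 h2
  have hvb : ∀ i ∈ s, v (c i • b i) = v (b i) := by
    intro i hi
    rw [Algebra.smul_def, map_mul, hv1 _ (hc i hi), one_mul]
  rw [Valuation.map_sum_eq_of_lt v hj ?_, hvb j hj, hb]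
  · intro i hi
    rw [Finset.mem_sdiff, Finset.mem_singleton] at hi
    rw [hvb j hj, hvb i hi.1]
    apply lt_of_pow_lt_pow_left₀ e (zero_le)
    rw [hb, hb]
    apply pow_lt_pow_right₀ hX
    exact lt_of_le_of_ne (hmax i hi.1) fun h => hi.2 (hω hi.1 hj h)


/-- linear combos of `b (c+i)` -/
theorem st_comb {K R Γ : Type*} [Field K] [Finite K] [CommRing R] [Algebra K R]
    [LinearOrderedCommGroupWithZero Γ] (v : Valuation R Γ) (X : Γ) (hX : 1 < X) (e : ℕ) (he : e ≠ 0)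
    (c : ℕ) (b : ℕ → R) (hb : ∀ n, c ≤ n → v (b n) ^ e = X ^ n) (k : ℕ) (κ : Fin k → K) (hκ : κ ≠ 0) :
    ∃ m < k, v (∑ i, κ i • b (c + i)) ^ e = X ^ (c + m) := by
  classical
  obtain ⟨i0, hi0⟩ := Function.ne_iff.1 hκ
  let s : Finset (Fin k) := Finset.univ.filter fun i => κ i ≠ 0
  have hs : s.Nonempty := ⟨i0, by simpa [s] using hi0⟩
  obtain ⟨j, hj, hmax⟩ := s.exists_max_image (fun i => c + (i : ℕ)) hs
  refine ⟨j, j.2, ?_⟩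
  have := st_max v X hX e he (fun i : Fin k => c + (i : ℕ)) (fun i => b (c + i))
    (fun i => hb _ (by omega)) κ s (fun i _ i' _ h => Fin.ext (by simpa using h)) (fun i hi => by simpa [s] using hi)
    j hj hmax
  rw [← this]
  congr 2
  symm
  apply Finset.sum_subset (Finset.subset_univ _)
  intro i _ hi
  have : κ i = 0 := by simpa [s] using hi
  simp [this]

theorem st_zero {K R Γ S : Type*} [Field K] [Finite K] [CommRing R] [Algebra K R]
    [LinearOrderedCommGroupWithZero Γ] (v : Valuation R Γ) (X : Γ) (hX : 1 < X) (e : ℕ) (he : e ≠ 0)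
    (c : ℕ) (b : ℕ → R) (hb : ∀ n, c ≤ n → v (b n) ^ e = X ^ n)
    (hspan : ∀ f M, v f ^ e ≤ X ^ M → f ∈ Submodule.span K (Set.range fun n : Fin (M + 1) => b n))
    (hwt : ∀ f, ∃ n, v f ^ e ≤ X ^ n) [Fintype S] (ev : S → R →ₐ[K] K)
    (hev : ∀ P, ∃ g, ev P g = 1 ∧ ∀ P', P' ≠ P → ev P' g = 0)
    (f : R) (D : ℕ) (hf : v f ^ e = X ^ D) (hf0 : ∀ P, ev P f = 0) : Fintype.card S ≤ D + c := by
  classical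
  choose g hg1 hg0 using hev
  choose w hw using fun P => hwt (g P)
  have hX0 : X ≠ 0 := (zero_lt_one.trans hX).ne'
  set k := (∑ P, w P) + 1 with hk
  set M := D + c + (∑ P, w P) with hM
  let Λ : ((Fin k → K) × (S → K)) →ₗ[K] R :=
    LinearMap.coprod ((LinearMap.mulLeft K f).comp (Fintype.linearCombination K fun i : Fin k => b (c + i)))
      (Fintype.linearCombination K g)
  have hΛ : ∀ h κ, Λ (h, κ) = f * (∑ i, h i • b (c + i)) + ∑ P, κ P • g P := by
    intro h κ
    simp [Λ, Fintype.linearCombination_apply, Finset.mul_sum]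
  set W := Submodule.span K (Set.range fun n : Fin (M + 1) => b n) with hW
  have hmem : ∀ z, Λ z ∈ W := by
    rintro ⟨h, κ⟩
    rw [hΛ]
    refine W.add_mem ?_ (W.sum_mem fun P _ => W.smul_mem _ (hspan _ _ ((hw P).trans ?_)))
    · rw [Finset.mul_sum]
      refine W.sum_mem fun i _ => ?_
      rw [mul_smul_comm]
      refine W.smul_mem _ (hspan _ _ ?_)
      rw [map_mul, mul_pow, hf, hb _ (by omega), ← pow_add]
      exact pow_le_pow_right₀ hX.le (by have := i.2; omega)
    · refine pow_le_pow_right₀ hX.le ?_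
      have := Finset.single_le_sum (f := w) (fun i _ => Nat.zero_le _) (Finset.mem_univ P)
      omega
  have hinj : Function.Injective Λ := by
    rw [injective_iff_map_eq_zero]
    rintro ⟨h, κ⟩ h0
    rw [hΛ] at h0
    have hκ : κ = 0 := by
      funext P
      have := congrArg (ev P) h0
      rw [map_add, map_mul, hf0, zero_mul, zero_add, map_sum, map_zero, Finset.sum_eq_single P] at this
      · simpa [hg1] using this
      · intro Q _ hQ
        simp [hg0 Q P hQ.symm]
      · simp
    have hh : h = 0 := by
      by_contra hne
      obtain ⟨m, _, hm⟩ := st_comb v X hX e he c b hb k h hne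
      have h1 : f * (∑ i, h i • b (c + i)) = 0 := by simpa [hκ] using h0
      have := congrArg (fun z => v z ^ e) h1
      simp only [map_mul, mul_pow, hf, hm, map_zero, zero_pow he] at this
      exact mul_ne_zero (pow_ne_zero _ hX0) (pow_ne_zero _ hX0) this
    simp [hκ, hh]
  have : FiniteDimensional K W := FiniteDimensional.span_of_finite K (Set.finite_range _)
  have h1 := LinearMap.finrank_le_finrank_of_injective (f := Λ.codRestrict W hmem)
    (fun a b h => hinj (by simpa using congrArg Subtype.val h))
  have h2 : Module.finrank K W ≤ M + 1 := by
    exact (finrank_range_le_card (R := K) (fun n : Fin (M + 1) => b n)).trans_eq (Fintype.card_fin _)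
  rw [Module.finrank_prod, Module.finrank_fin_fun, Module.finrank_fintype_fun_eq_card] at h1
  omega

theorem st_abs {K R Γ S : Type*} [Field K] [Finite K] [CommRing R] [Algebra K R]
    [LinearOrderedCommGroupWithZero Γ] (v : Valuation R Γ) (X : Γ) (hX : 1 < X) (e : ℕ) (he : e ≠ 0)
    (c : ℕ) (b : ℕ → R) (hb : ∀ n, c ≤ n → v (b n) ^ e = X ^ n)
    (hspan : ∀ f M, v f ^ e ≤ X ^ M → f ∈ Submodule.span K (Set.range fun n : Fin (M + 1) => b n))
    (hwt : ∀ f, ∃ n, v f ^ e ≤ X ^ n) [Fintype S] (ev : S → R →ₐ[K] K)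
    (hev : ∀ P, ∃ g, ev P g = 1 ∧ ∀ P', P' ≠ P → ev P' g = 0)
    (p n μ : ℕ) [Fact p.Prime] [CharP K p] (hq : Nat.card K = p ^ n) (hμ : μ ≤ n)
    (hlt : c + p ^ μ + 1 < p ^ (n - μ)) :
    Fintype.card S ≤ p ^ n + p ^ (n - μ) * (2 * c + 1) + p ^ μ + 2 * c + 2 := by
  classical
  have := Fintype.ofFinite K
  have hX0 : X ≠ 0 := (zero_lt_one.trans hX).ne'
  have hR : Nontrivial R := ⟨b c, 0, fun h => by
    have := hb c le_rfl
    rw [h, map_zero, zero_pow he] at this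
    exact pow_ne_zero _ hX0 this.symm⟩
  have hcR : CharP R p := charP_of_injective_algebraMap (algebraMap K R).injective p
  set B := p ^ μ with hB
  set Q := p ^ (n - μ) with hQ
  have hB0 : B ≠ 0 := by have := (Fact.out : p.Prime).pos; positivity
  have hBQ : B * Q = p ^ n := by rw [hB, hQ, ← pow_add]; congr 1; omega
  set l := B + 2
  set m := B + c + 1
  let A : (Fin l → K) → R := fun κ => ∑ k, κ k • b (c + k)
  let Ψ : (Fin m → Fin l → K) → R := fun κ => ∑ i : Fin m, A (κ i) ^ B * b (c + i)
  set M := (c + l - 1) * B + (c + m - 1) with hM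
  have hle : ∀ κ, v (A κ) ^ e ≤ X ^ (c + l - 1) := by
    intro κ
    by_cases h : κ = 0
    · simp [A, h, zero_pow he]
    · obtain ⟨j, hj, h⟩ := st_comb v X hX e he c b hb l κ h
      rw [h]
      exact pow_le_pow_right₀ hX.le (by omega)
  set W := Submodule.span K (Set.range fun n : Fin (M + 1) => b n) with hW
  have hmem : ∀ κ, Ψ κ ∈ W := by
    intro κ
    refine W.sum_mem fun i _ => hspan _ _ ?_
    rw [map_mul, mul_pow, hb _ (by omega), map_pow, ← pow_mul, mul_comm B, pow_mul, hM, pow_add X ((c + l - 1) * B), pow_mul X]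
    exact mul_le_mul' (pow_le_pow_left' (hle _) _) (pow_le_pow_right₀ hX.le (by have := i.2; omega))
  have : FiniteDimensional K W := FiniteDimensional.span_of_finite K (Set.finite_range _)
  have h2 : Module.finrank K W ≤ M + 1 := by
    exact (finrank_range_le_card (R := K) (fun n : Fin (M + 1) => b n)).trans_eq (Fintype.card_fin _)
  have : Finite W := Module.finite_of_finite K
  have := Fintype.ofFinite W
  have hcard : Fintype.card W < Fintype.card (Fin m → Fin l → K) := by
    rw [Module.card_eq_pow_finrank (K := K)]
    simp only [Fintype.card_pi, Finset.prod_const, Finset.card_univ, Fintype.card_fin]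
    rw [← pow_mul]
    apply pow_lt_pow_right₀ Fintype.one_lt_card
    have : M + 1 < l * m := by
      have e1 : c + l - 1 = c + B + 1 := by omega
      have e2 : c + m - 1 = 2 * c + B := by omega
      rw [hM, e1, e2]
      simp only [l, m]
      nlinarith
    omega
  obtain ⟨κ1, κ2, hne, heq⟩ := Fintype.exists_ne_map_eq_of_card_lt (fun κ => (⟨Ψ κ, hmem κ⟩ : W)) hcard
  have heq : Ψ κ1 = Ψ κ2 := congrArg Subtype.val heq
  set κ := κ1 - κ2 with hκ
  have hκ0 : κ ≠ 0 := sub_ne_zero.2 hne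
  have hA : ∀ i, A (κ i) = A (κ1 i) - A (κ2 i) := by
    intro i
    simp [A, hκ, sub_smul, Finset.sum_sub_distrib]
  have hΨ : Ψ κ = 0 := by
    have : Ψ κ = Ψ κ1 - Ψ κ2 := by
      simp only [Ψ, hA, hB, sub_pow_char_pow, sub_mul, Finset.sum_sub_distrib]
    rw [this, heq, sub_self]
  let f : R := ∑ i : Fin m, A (κ i) * b (c + i) ^ Q
  -- valuation of f
  have hf : ∃ D ≤ (c + l - 1) + Q * (c + m - 1), v f ^ e = X ^ D := by
    let s : Finset (Fin m) := Finset.univ.filter fun i => κ i ≠ 0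
    obtain ⟨i0, hi0⟩ := Function.ne_iff.1 hκ0
    have hs : s.Nonempty := ⟨i0, by simpa [s] using hi0⟩
    let ω : Fin m → ℕ := fun i => if h : κ i = 0 then 0 else
      c + (st_comb v X hX e he c b hb l (κ i) h).choose + Q * (c + i)
    have hω : ∀ i ∈ s, ∃ t < l, ω i = c + t + Q * (c + i) ∧ v (A (κ i) * b (c + i) ^ Q) ^ e = X ^ ω i := by
      intro i hi
      have hi : κ i ≠ 0 := by simpa [s] using hi
      have h3 := (st_comb v X hX e he c b hb l (κ i) hi).choose_spec
      have h4 : ω i = c + (st_comb v X hX e he c b hb l (κ i) hi).choose + Q * (c + i) := by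
        simp only [ω, dif_neg hi]
      generalize (st_comb v X hX e he c b hb l (κ i) hi).choose = t at h3 h4
      refine ⟨t, h3.1, h4, ?_⟩
      have h5 : v (A (κ i)) ^ e = X ^ (c + t) := h3.2
      rw [h4, map_mul, mul_pow, map_pow, ← pow_mul, mul_comm Q e, pow_mul, hb _ (by omega), h5, pow_add X (c + t), ← pow_mul, mul_comm Q]
    obtain ⟨j, hj, hmax⟩ := s.exists_max_image ω hs
    have hstrict : ∀ i ∈ s, ∀ i' ∈ s, ω i = ω i' → i = i' := by
      intro i hi i' hi' h
      obtain ⟨t, ht, h1, _⟩ := hω i hi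
      obtain ⟨t', ht', h1', _⟩ := hω i' hi'
      rw [h1, h1'] at h
      have ht : c + t < Q := by omega
      have ht' : c + t' < Q := by omega
      have := congrArg (· / Q) h
      simp only [Nat.add_mul_div_left _ _ (show 0 < Q by omega), Nat.div_eq_of_lt ht, Nat.div_eq_of_lt ht'] at this
      exact Fin.ext (by omega)
    obtain ⟨t, ht, h1, h2⟩ := hω j hj
    refine ⟨ω j, ?_, ?_⟩
    · rw [h1]
      have : Q * (c + j) ≤ Q * (c + m - 1) := Nat.mul_le_mul_left _ (by have := j.2; omega)
      omega
    · have hfs : f = ∑ i ∈ s, A (κ i) * b (c + i) ^ Q := by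
        symm
        apply Finset.sum_subset (Finset.subset_univ _)
        intro i _ hi
        have : κ i = 0 := by simpa [s] using hi
        simp [this, A]
      rw [hfs, Valuation.map_sum_eq_of_lt v hj ?_, h2]
      intro i hi
      rw [Finset.mem_sdiff, Finset.mem_singleton] at hi
      apply lt_of_pow_lt_pow_left₀ e zero_le
      obtain ⟨_, _, _, h2'⟩ := hω i hi.1
      rw [h2, h2']
      apply pow_lt_pow_right₀ hX
      exact lt_of_le_of_ne (hmax i hi.1) fun h => hi.2 (hstrict i hi.1 j hj h)
  obtain ⟨D, hD, hvf⟩ := hf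
  have hf0 : ∀ P, ev P f = 0 := by
    intro P
    have h3 : ev P f ^ B = 0 := by
      have h4 : ev P (Ψ κ) = 0 := by rw [hΨ, map_zero]
      rw [← h4]
      simp only [f, Ψ, map_sum, map_mul, map_pow, hB]
      rw [sum_pow_char_pow]
      refine Finset.sum_congr rfl fun i _ => ?_
      rw [mul_pow, ← pow_mul, ← hB, mul_comm Q, hBQ, ← hq, Nat.card_eq_fintype_card, FiniteField.pow_card]
    exact (pow_eq_zero_iff hB0).1 h3
  have h5 := st_zero v X hX e he c b hb hspan hwt ev hev f D hvf hf0
  have e1 : c + l - 1 = c + B + 1 := by omega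
  have e2 : c + m - 1 = 2 * c + B := by omega
  rw [e1, e2] at hD
  have : Q * (2 * c + B) = Q * (2 * c) + B * Q := by ring
  have : Q * (2 * c + 1) = Q * (2 * c) + Q := by ring
  omega

theorem st_place {K : Type} [Field K] (F G : K[X]) (hG : G.natDegree ≠ 0) :
    ∃ (L : Type) (_ : Field L) (_ : Algebra K L) (Γ : Type) (_ : LinearOrderedCommGroupWithZero Γ)
      (v : Valuation L Γ) (x y : L), 1 < v x ∧ aeval x F = aeval y G := by
  let L := AlgebraicClosure (RatFunc K)
  let x : L := algebraMap (RatFunc K) L RatFunc.X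
  have hx : Transcendental K x := by
    rw [transcendental_algebraMap_iff (algebraMap (RatFunc K) L).injective]
    exact RatFunc.transcendental_X
  obtain ⟨y, hy⟩ : ∃ y : L, aeval y G = aeval x F := by
    obtain ⟨y, hy⟩ := IsAlgClosed.exists_root (G.map (algebraMap K L) - C (aeval x F)) (by
      rw [degree_sub_C]
      · rw [degree_map]; intro h; exact hG (natDegree_eq_of_degree_eq_some h)
      · rw [degree_map]; exact natDegree_pos_iff_degree_pos.1 (Nat.pos_of_ne_zero hG))
    refine ⟨y, ?_⟩
    simpa [IsRoot, sub_eq_zero, aeval_def, eval_map] using hy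
  have hxR : x ∉ (integralClosure K L).toSubring := by
    intro h
    exact hx (IsIntegral.isAlgebraic h)
  have : IsIntegrallyClosedIn (integralClosure K L).toSubring L := by
    exact inferInstanceAs (IsIntegrallyClosedIn (integralClosure K L) L)
  obtain ⟨V, h1, h2⟩ := Subring.exists_le_valuationSubring_of_isIntegrallyClosedIn hxR
  exact ⟨L, inferInstance, inferInstance, _, inferInstance, V.valuation, x, y,
    not_le.1 fun h => h2 ((V.valuation_le_one_iff x).1 h), hy.symm⟩

theorem st_const {K L Γ : Type*} [Field K] [Finite K] [CommRing L] [Algebra K L]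
    [LinearOrderedCommGroupWithZero Γ] (v : Valuation L Γ) (c : K) : v (algebraMap K L c) ≤ 1 := by
  by_cases hc : c = 0
  · simp [hc]
  have := Fintype.ofFinite K
  have h1 : c ^ (Fintype.card K - 1) = 1 := FiniteField.pow_card_sub_one_eq_one c hc
  have h2 : v (algebraMap K L c) ^ (Fintype.card K - 1) = 1 := by
    rw [← map_pow, ← map_pow, h1]; simp
  have h3 : Fintype.card K - 1 ≠ 0 := by
    have := Fintype.one_lt_card (α := K); omega
  exact ((pow_eq_one_iff_of_nonneg zero_le h3).1 h2).le

theorem st_aeval {K L Γ : Type*} [Field K] [Finite K] [CommRing L] [Algebra K L]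
    [LinearOrderedCommGroupWithZero Γ] (v : Valuation L Γ) (x : L) (hx : 1 < v x) (F : K[X]) (hF : F ≠ 0) :
    v (aeval x F) = v x ^ F.natDegree := by
  have := st_max v (v x) hx 1 one_ne_zero (fun i : ℕ => i) (fun i => x ^ i) (by simp) F.coeff F.support
    (fun i _ j _ h => h) (fun i hi => mem_support_iff.1 hi) F.natDegree (natDegree_mem_support_of_nonzero hF)
    (fun i hi => le_natDegree_of_mem_supp _ hi)
  rw [pow_one] at this
  rw [← this, aeval_eq_sum_range]
  congr 1
  symm
  apply Finset.sum_subset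
  · intro i hi
    exact Finset.mem_range_succ_iff.2 (le_natDegree_of_mem_supp _ hi)
  · intro i _ hi
    rw [notMem_support_iff.1 hi, zero_smul]

theorem st_aeval_le {K L Γ : Type*} [Field K] [Finite K] [CommRing L] [Algebra K L]
    [LinearOrderedCommGroupWithZero Γ] (v : Valuation L Γ) (x : L) (hx : v x ≤ 1) (F : K[X]) :
    v (aeval x F) ≤ 1 := by
  rw [aeval_eq_sum_range]
  refine v.map_sum_le fun i _ => ?_
  rw [Algebra.smul_def, map_mul, map_pow]
  exact mul_le_one' (st_const v _) (pow_le_one₀ zero_le hx)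

theorem st_weight (d e : ℕ) (he : e ≠ 0) (hde : Nat.Coprime d e) (n : ℕ) (hn : d * e ≤ n) :
    ∃ i j, j < e ∧ e * i + d * j = n := by
  obtain ⟨j, hj, h⟩ := Nat.exists_mul_mod_eq_of_coprime n hde he
  have h1 : d * j ≤ n := (Nat.mul_le_mul_left d hj.le).trans hn
  obtain ⟨i, hi⟩ := (Nat.modEq_iff_dvd' h1).1 h
  exact ⟨i, j, hj, by omega⟩

theorem st_weight_inj (d e : ℕ) (hde : Nat.Coprime d e) (i j i' j' : ℕ) (hj : j < e) (hj' : j' < e)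
    (h : e * i + d * j = e * i' + d * j') : i = i' ∧ j = j' := by
  have h1 : d * j ≡ d * j' [MOD e] := by
    have : (e * i + d * j) % e = (e * i' + d * j') % e := by rw [h]
    simpa [Nat.ModEq, Nat.mul_add_mod] using this
  have h2 : j ≡ j' [MOD e] := Nat.ModEq.cancel_left_of_coprime (by simpa [Nat.coprime_comm] using hde) h1
  have h3 : j = j' := Nat.ModEq.eq_of_lt_of_lt h2 hj hj'
  subst h3
  refine ⟨?_, rfl⟩
  exact Nat.eq_of_mul_eq_mul_left (by omega : 0 < e) (by omega)

open Classical in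
theorem st_monic {K : Type} [Field K] [Finite K] (F G : K[X]) (d e : ℕ) (hF : F.natDegree = d)
    (hG : G.natDegree = e) (hd : d ≠ 0) (he : e ≠ 0) (hde : Nat.Coprime d e) (hm : G.Monic)
    (p n μ : ℕ) [Fact p.Prime] [CharP K p] (hq : Nat.card K = p ^ n) (hμ : μ ≤ n)
    (hlt : d * e + p ^ μ + 1 < p ^ (n - μ)) :
    Nat.card {P : K × K // F.eval P.1 = G.eval P.2} ≤
      p ^ n + p ^ (n - μ) * (2 * (d * e) + 1) + p ^ μ + 2 * (d * e) + 2 := by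
  have := Fintype.ofFinite K
  obtain ⟨L, _, _, Γ, _, V, x, y, hx, hxy⟩ := st_place F G (by omega)
  have hF0 : F ≠ 0 := by rintro rfl; simp at hF; omega
  have hG0 : G ≠ 0 := hm.ne_zero
  have hvF := st_aeval V x hx F hF0
  have hy : 1 < V y := by
    by_contra h
    have h1 := st_aeval_le V y (not_lt.1 h) G
    rw [← hxy, hvF] at h1
    exact absurd h1 (not_le.2 (one_lt_pow₀ hx (by omega)))
  have hvG := st_aeval V y hy G hG0
  rw [← hxy, hvF, hF, hG] at hvG
  set h : K[X][X] := G.map C - C F with hh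
  have hmon : h.Monic := (hm.map C).sub_of_left (by
    rw [hm.degree_map]
    refine (degree_C_le).trans_lt ?_
    exact natDegree_pos_iff_degree_pos.1 (by omega))
  have hdeg : h.natDegree = e := by rw [hh, natDegree_sub_C, hm.natDegree_map, hG]
  let R := AdjoinRoot h
  have hθ : eval₂ ((aeval x : K[X] →ₐ[K] L) : K[X] →+* L) y h = 0 := by
    rw [hh, eval₂_sub, eval₂_C, eval₂_map, sub_eq_zero, RingHom.coe_coe, hxy, aeval_def]
    congr 1
    ext; simp
  let θ : R →ₐ[K] L := AdjoinRoot.liftAlgHom h (aeval x) y hθ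
  let v : Valuation R Γ := V.comap (θ : R →+* L)
  let x' : R := AdjoinRoot.of h Polynomial.X
  let y' : R := AdjoinRoot.root h
  have hvx : v x' = V x := by
    have : θ x' = x := by
      refine (AdjoinRoot.liftAlgHom_of h (aeval x) y hθ _).trans ?_
      simp
    exact congrArg V this
  have hvy : v y' = V y := by
    have : θ y' = y := AdjoinRoot.liftAlgHom_root h (aeval x) y hθ
    exact congrArg V this
  have hmonv : ∀ i j, v (x' ^ i * y' ^ j) ^ e = V x ^ (e * i + d * j) := by
    intro i j
    rw [map_mul, map_pow, map_pow, hvx, hvy, mul_pow, pow_add, pow_mul (V x) d j, hvG, ← pow_mul, ← pow_mul,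
      ← pow_mul, mul_comm i, mul_comm j]
  let b : ℕ → R := fun n => if hn : ∃ i j, j < e ∧ e * i + d * j = n then
    x' ^ hn.choose * y' ^ hn.choose_spec.choose else 0
  have hbmon : ∀ i j, j < e → b (e * i + d * j) = x' ^ i * y' ^ j := by
    intro i j hj
    have hn : ∃ i' j', j' < e ∧ e * i' + d * j' = e * i + d * j := ⟨i, j, hj, rfl⟩
    have h1 := hn.choose_spec.choose_spec
    have h2 := st_weight_inj d e hde _ _ _ _ h1.1 hj h1.2
    simp only [b, dif_pos hn]
    exact congrArg₂ (fun i j => x' ^ i * y' ^ j) h2.1 h2.2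
  have hbv : ∀ n, (∃ i j, j < e ∧ e * i + d * j = n) → v (b n) ^ e = V x ^ n := by
    rintro n ⟨i, j, hj, rfl⟩
    rw [hbmon i j hj, hmonv]
  have hb0 : ∀ n, ¬ (∃ i j, j < e ∧ e * i + d * j = n) → b n = 0 := by
    intro n hn
    simp only [b, dif_neg hn]
  have hspan0 : ∀ f : R, f ∈ Submodule.span K (Set.range b) := by
    intro f
    obtain ⟨g, rfl⟩ := AdjoinRoot.mk_surjective f
    have hg : AdjoinRoot.mk h g = AdjoinRoot.mk h (g %ₘ h) := by
      conv_lhs => rw [← modByMonic_add_div g h]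
      simp
    rw [hg]
    have hne1 : h ≠ 1 := by intro h1; rw [h1, natDegree_one] at hdeg; exact he hdeg.symm
    have hlt := natDegree_modByMonic_lt g hmon hne1
    rw [hdeg] at hlt
    rw [as_sum_range' (g %ₘ h) e hlt, map_sum]
    refine Submodule.sum_mem _ fun j hj => ?_
    rw [← C_mul_X_pow_eq_monomial, map_mul, map_pow, AdjoinRoot.mk_X, AdjoinRoot.mk_C]
    generalize (g %ₘ h).coeff j = u
    induction u using Polynomial.induction_on' with
    | add u1 u2 h1 h2 => rw [map_add, add_mul]; exact Submodule.add_mem _ h1 h2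
    | monomial i c =>
      have : AdjoinRoot.of h (monomial i c) * AdjoinRoot.root h ^ j = c • b (e * i + d * j) := by
        rw [hbmon i j (Finset.mem_range.1 hj), ← C_mul_X_pow_eq_monomial, map_mul, map_pow, Algebra.smul_def, mul_assoc]
        rfl
      rw [this]
      exact Submodule.smul_mem _ _ (Submodule.subset_span ⟨_, rfl⟩)
  have hcomb : ∀ f : R, f ≠ 0 → ∃ (s : Finset ℕ) (c : ℕ → K) (j : ℕ), (∀ i ∈ s, i ≤ j) ∧ v f ^ e = V x ^ j ∧
      f = ∑ i ∈ s, c i • b i := by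
    intro f hf
    obtain ⟨c, hc⟩ := Finsupp.mem_span_range_iff_exists_finsupp.1 (hspan0 f)
    let s := c.support.filter fun n => ∃ i j, j < e ∧ e * i + d * j = n
    have hfs : f = ∑ i ∈ s, c i • b i := by
      rw [← hc, Finsupp.sum, Finset.sum_filter]
      refine Finset.sum_congr rfl fun i _ => ?_
      split_ifs with h1
      · rfl
      · rw [hb0 _ h1, smul_zero]
    have hs : s.Nonempty := by
      rw [Finset.nonempty_iff_ne_empty]
      intro h1
      rw [h1] at hfs
      exact hf (by simpa using hfs)
    obtain ⟨j, hj, hmax⟩ := s.exists_max_image id hs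
    refine ⟨s, c, j, hmax, ?_, hfs⟩
    conv_lhs => rw [hfs]
    let b' : s → R := fun i => b i
    have := st_max v (V x) hx e he (fun i : s => (i : ℕ)) (fun i : s => b i)
      (fun i => hbv _ (Finset.mem_filter.1 i.2).2) (fun i : s => c i) s.attach
      (fun i _ j _ h => Subtype.ext h) (fun i _ => by simpa using (Finset.mem_filter.1 i.2).1) ⟨j, hj⟩ (by simp)
      (fun i _ => hmax i i.2)
    rw [← this, Finset.sum_attach s (fun i => c i • b i)]
  let S := {P : K × K // F.eval P.1 = G.eval P.2}
  have hevP : ∀ P : S, eval₂ ((aeval P.1.1 : K[X] →ₐ[K] K) : K[X] →+* K) P.1.2 h = 0 := by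
    intro P
    rw [hh, eval₂_sub, eval₂_C, eval₂_map, sub_eq_zero, RingHom.coe_coe, coe_aeval_eq_eval, P.2, ← eval₂_id]
    congr 1
    ext; simp
  let ev : S → R →ₐ[K] K := fun P => AdjoinRoot.liftAlgHom h (aeval P.1.1) P.1.2 (hevP P)
  have hevx : ∀ P, ev P x' = P.1.1 := by
    intro P
    refine (AdjoinRoot.liftAlgHom_of h (aeval P.1.1) P.1.2 (hevP P) _).trans ?_
    simp
  have hevy : ∀ P, ev P y' = P.1.2 := by
    intro P
    exact AdjoinRoot.liftAlgHom_root h (aeval P.1.1) P.1.2 (hevP P)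
  have hcd : Fintype.card K - 1 ≠ 0 := by have := Fintype.one_lt_card (α := K); omega
  rw [Nat.card_eq_fintype_card]
  refine st_abs v (V x) hx e he (d * e) b (fun n hn => hbv n (st_weight d e he hde n hn)) ?_ ?_ ev ?_ p n μ hq hμ hlt
  · intro f M hfM
    by_cases hf : f = 0
    · rw [hf]; exact Submodule.zero_mem _
    obtain ⟨s, c, j, h1, h2, h3⟩ := hcomb f hf
    rw [h2, pow_le_pow_iff_right₀ hx] at hfM
    rw [h3]
    refine Submodule.sum_mem _ fun i hi => Submodule.smul_mem _ _ (Submodule.subset_span ⟨⟨i, ?_⟩, rfl⟩)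
    have := h1 i hi
    omega
  · intro f
    by_cases hf : f = 0
    · exact ⟨0, by simp [hf, zero_pow he]⟩
    obtain ⟨s, c, j, h1, h2, h3⟩ := hcomb f hf
    exact ⟨j, h2.le⟩
  · intro P
    refine ⟨(1 - (x' - algebraMap K R P.1.1) ^ (Fintype.card K - 1)) *
      (1 - (y' - algebraMap K R P.1.2) ^ (Fintype.card K - 1)), ?_, ?_⟩
    · simp [hevx, hevy, zero_pow hcd]
    · intro P' hP
      simp only [map_mul, map_sub, map_one, map_pow, hevx, hevy, AlgHom.commutes, Algebra.algebraMap_self, RingHom.id_apply]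
      by_cases h1 : P'.1.1 = P.1.1
      · have h2 : P'.1.2 - P.1.2 ≠ 0 := fun h2 => hP (Subtype.ext (Prod.ext h1 (sub_eq_zero.1 h2)))
        rw [FiniteField.pow_card_sub_one_eq_one _ h2]; simp
      · rw [FiniteField.pow_card_sub_one_eq_one _ (sub_ne_zero.2 h1)]; simp

theorem st_count {K : Type} [Field K] [Finite K] (F G : K[X]) (d e : ℕ) (hF : F.natDegree = d)
    (hG : G.natDegree = e) (hd : d ≠ 0) (he : e ≠ 0) (hde : Nat.Coprime d e)
    (p n μ : ℕ) [Fact p.Prime] [CharP K p] (hq : Nat.card K = p ^ n) (hμ : μ ≤ n)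
    (hlt : d * e + p ^ μ + 1 < p ^ (n - μ)) :
    Nat.card {P : K × K // F.eval P.1 = G.eval P.2} ≤
      p ^ n + p ^ (n - μ) * (2 * (d * e) + 1) + p ^ μ + 2 * (d * e) + 2 := by
  have hG0 : G ≠ 0 := by rintro rfl; simp at hG; omega
  have hl : G.leadingCoeff⁻¹ ≠ 0 := inv_ne_zero (leadingCoeff_ne_zero.2 hG0)
  have := st_monic (C G.leadingCoeff⁻¹ * F) (C G.leadingCoeff⁻¹ * G) d e
    (by rw [natDegree_C_mul hl, hF]) (by rw [natDegree_C_mul hl, hG]) hd he hde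
    (by rw [mul_comm]; exact monic_mul_leadingCoeff_inv hG0) p n μ hq hμ hlt
  simpa [hl] using this

theorem dg_mul_le {K : Type} [Field K] {a b : K[X]} {m n : ℕ} (ha : a.degree ≤ m) (hb : b.degree ≤ n) :
    (a * b).degree ≤ ((m + n : ℕ) : WithBot ℕ) := by
  rw [degree_mul, Nat.cast_add]
  exact add_le_add ha hb

theorem dg_mul_lt {K : Type} [Field K] {a b : K[X]} {m n : ℕ} (ha : a.degree ≤ m) (hb : b.degree < n) :
    (a * b).degree < ((m + n : ℕ) : WithBot ℕ) := by
  by_cases h1 : a = 0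
  · simp [h1]
  by_cases h2 : b = 0
  · simp [h2]
  rw [degree_mul, degree_eq_natDegree h1, degree_eq_natDegree h2, ← Nat.cast_add]
  rw [degree_eq_natDegree h1] at ha
  rw [degree_eq_natDegree h2] at hb
  have ha : a.natDegree ≤ m := by exact_mod_cast ha
  have hb : b.natDegree < n := by exact_mod_cast hb
  exact_mod_cast (by omega : a.natDegree + b.natDegree < m + n)

theorem dg_mul_lt' {K : Type} [Field K] {a b : K[X]} {m n : ℕ} (ha : a.degree < m) (hb : b.degree ≤ n) :
    (a * b).degree < ((m + n : ℕ) : WithBot ℕ) := by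
  rw [mul_comm, add_comm]; exact dg_mul_lt hb ha

theorem dg_mul_eq {K : Type} [Field K] {a b : K[X]} {m n : ℕ} (ha : a.degree = m) (hb : b.degree = n) :
    (a * b).degree = ((m + n : ℕ) : WithBot ℕ) := by
  rw [degree_mul, Nat.cast_add, ha, hb]

theorem dg_add_eq {K : Type} [Field K] {a b : K[X]} {m : ℕ} (ha : a.degree = m) (hb : b.degree < m) :
    (a + b).degree = m := by
  rw [degree_add_eq_left_of_degree_lt (by rwa [ha]), ha]

theorem dg_add_eq' {K : Type} [Field K] {a b : K[X]} {m : ℕ} (ha : a.degree < m) (hb : b.degree = m) :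
    (a + b).degree = m := by
  rw [add_comm]; exact dg_add_eq hb ha

theorem dg_add_le {K : Type} [Field K] {a b : K[X]} {m : WithBot ℕ} (ha : a.degree ≤ m) (hb : b.degree ≤ m) :
    (a + b).degree ≤ m := (degree_add_le a b).trans (max_le ha hb)

theorem dg_add_lt {K : Type} [Field K] {a b : K[X]} {m : WithBot ℕ} (ha : a.degree < m) (hb : b.degree < m) :
    (a + b).degree < m := (degree_add_le a b).trans_lt (max_lt ha hb)

theorem dg_lt_of_le {K : Type} [Field K] {a : K[X]} {m n : ℕ} (ha : a.degree ≤ m) (h : m < n) :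
    a.degree < n := ha.trans_lt (by exact_mod_cast h)

def IsB {K : Type} [Field K] (M : Matrix (Fin 2) (Fin 2) K[X]) (D : ℕ) : Prop :=
  (M 1 0).degree = D ∧ ∀ i j, (M i j).degree ≤ D

def IsC {K : Type} [Field K] (M : Matrix (Fin 2) (Fin 2) K[X]) (D : ℕ) : Prop :=
  (M 0 1).degree = D ∧ (M 0 0).degree < D ∧ (M 1 0).degree < D ∧ (M 1 1).degree < D

def IsE {K : Type} [Field K] (M : Matrix (Fin 2) (Fin 2) K[X]) (D : ℕ) : Prop :=
  (M 1 1).degree = D ∧ (M 0 1).degree ≤ D ∧ (M 0 0).degree < D ∧ (M 1 0).degree < D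

theorem IsB.mulC {K : Type} [Field K] {M C : Matrix (Fin 2) (Fin 2) K[X]} {D ρ : ℕ} (h : IsB M D) (hc : IsC C ρ) :
    IsE (M * C) (D + ρ) := by
  obtain ⟨h0, h1⟩ := h
  obtain ⟨c1, c2, c3, c4⟩ := hc
  simp only [IsE, Matrix.mul_apply, Fin.sum_univ_two]
  exact ⟨dg_add_eq (dg_mul_eq h0 c1) (dg_mul_lt (h1 _ _) c4), dg_add_le (dg_mul_le (h1 _ _) c1.le) (dg_mul_le (h1 _ _) c4.le),
    dg_add_lt (dg_mul_lt (h1 _ _) c2) (dg_mul_lt (h1 _ _) c3), dg_add_lt (dg_mul_lt (h1 _ _) c2) (dg_mul_lt (h1 _ _) c3)⟩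

theorem IsE.mulE {K : Type} [Field K] {M C : Matrix (Fin 2) (Fin 2) K[X]} {D ρ : ℕ} (h : IsE M D) (hc : IsE C ρ) :
    IsE (M * C) (D + ρ) := by
  obtain ⟨h1, h2, h3, h4⟩ := h
  obtain ⟨c1, c2, c3, c4⟩ := hc
  simp only [IsE, Matrix.mul_apply, Fin.sum_univ_two]
  exact ⟨dg_add_eq' (dg_mul_lt' h4 c2) (dg_mul_eq h1 c1), dg_add_le (dg_mul_le h3.le c2) (dg_mul_le h2 c1.le),
    dg_add_lt (dg_mul_lt h3.le c3) (dg_mul_lt h2 c4), dg_add_lt (dg_mul_lt h4.le c3) (dg_mul_lt h1.le c4)⟩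

theorem IsE.mulB {K : Type} [Field K] {M C : Matrix (Fin 2) (Fin 2) K[X]} {D ρ : ℕ} (h : IsE M D) (hc : IsB C ρ) :
    IsB (M * C) (D + ρ) := by
  obtain ⟨h1, h2, h3, h4⟩ := h
  obtain ⟨c1, c2⟩ := hc
  simp only [IsB, Matrix.mul_apply, Fin.sum_univ_two]
  refine ⟨dg_add_eq' (dg_mul_lt' h4 (c2 _ _)) (dg_mul_eq h1 c1), ?_⟩
  intro i j
  fin_cases i
  · exact dg_add_le (dg_mul_le h3.le (c2 _ _)) (dg_mul_le h2 (c2 _ _))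
  · exact dg_add_le (dg_mul_le h4.le (c2 _ _)) (dg_mul_le h1.le (c2 _ _))

theorem IsE.trace {K : Type} [Field K] {M : Matrix (Fin 2) (Fin 2) K[X]} {D : ℕ} (h : IsE M D) :
    M.trace.natDegree = D := by
  obtain ⟨h1, h2, h3, h4⟩ := h
  rw [Matrix.trace_fin_two]
  exact natDegree_eq_of_degree_eq_some (dg_add_eq' h3 h1)

noncomputable def un {K : Type} [Field K] (R : K[X]) : Matrix.SpecialLinearGroup (Fin 2) K[X] :=
  ⟨!![1, R; 0, 1], by simp⟩

theorem un_coe {K : Type} [Field K] (R : K[X]) : (un R : Matrix (Fin 2) (Fin 2) K[X]) = !![1, R; 0, 1] := rfl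

theorem un_add {K : Type} [Field K] (R S : K[X]) : un (R + S) = un R * un S := by
  apply Subtype.ext
  rw [Matrix.SpecialLinearGroup.coe_mul, un_coe, un_coe, un_coe, Matrix.mul_fin_two]
  simp [add_comm]

theorem un_zero {K : Type} [Field K] : un (0 : K[X]) = 1 := by
  apply Subtype.ext
  rw [un_coe, Matrix.SpecialLinearGroup.coe_one, Matrix.one_fin_two]

theorem un_neg {K : Type} [Field K] (R : K[X]) : un (-R) = (un R)⁻¹ := by
  rw [eq_inv_iff_mul_eq_one, ← un_add, neg_add_cancel, un_zero]

theorem un_C {K : Type} [Field K] (R : K[X]) (ρ : ℕ) (hR : R.degree = ρ) (hρ : 1 ≤ ρ) :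
    IsC (un R : Matrix (Fin 2) (Fin 2) K[X]) ρ := by
  refine ⟨?_, ?_, ?_, ?_⟩ <;> simp [un, hR] <;> omega

theorem un_B_un {K : Type} [Field K] (R S : K[X]) (ρ σ D : ℕ) (hR : R.degree = ρ) (hρ : 1 ≤ ρ)
    (hS : S.degree = σ) (hσ : 1 ≤ σ) (M : Matrix.SpecialLinearGroup (Fin 2) K[X])
    (hM : IsB (M : Matrix (Fin 2) (Fin 2) K[X]) D) :
    IsC ((un R * M * un S : Matrix.SpecialLinearGroup (Fin 2) K[X]) : Matrix (Fin 2) (Fin 2) K[X]) (ρ + D + σ) := by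
  obtain ⟨h0, h1⟩ := hM
  have e : ((un R * M * un S : Matrix.SpecialLinearGroup (Fin 2) K[X]) : Matrix (Fin 2) (Fin 2) K[X]) =
    !![M 0 0 + R * M 1 0, (M 0 1 + R * M 1 1 + M 0 0 * S) + R * M 1 0 * S; M 1 0, M 1 0 * S + M 1 1] := by
    rw [Matrix.SpecialLinearGroup.coe_mul, Matrix.SpecialLinearGroup.coe_mul, un_coe, un_coe,
      Matrix.eta_fin_two (M : Matrix (Fin 2) (Fin 2) K[X]), Matrix.mul_fin_two, Matrix.mul_fin_two]
    simp only [of_apply, cons_val', cons_val_zero, cons_val_one, cons_val_fin_one]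
    congr 1
    refine congrArg₂ _ (congrArg₂ _ ?_ (congrArg₂ _ ?_ rfl)) (congrArg₂ _ (congrArg₂ _ ?_ (congrArg₂ _ ?_ rfl)) rfl) <;> ring
  rw [e]
  refine ⟨?_, ?_, ?_, ?_⟩ <;> simp only [of_apply, cons_val', cons_val_zero, cons_val_one, cons_val_fin_one]
  · refine dg_add_eq' (dg_add_lt (dg_add_lt ?_ ?_) ?_) (dg_mul_eq (dg_mul_eq hR h0) hS)
    · exact dg_lt_of_le (h1 _ _) (by omega)
    · exact dg_lt_of_le (dg_mul_le hR.le (h1 _ _)) (by omega)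
    · exact dg_lt_of_le (dg_mul_le (h1 _ _) hS.le) (by omega)
  · refine dg_add_lt (dg_lt_of_le (h1 _ _) (by omega)) (dg_lt_of_le (dg_mul_le hR.le h0.le) (by omega))
  · exact dg_lt_of_le h0.le (by omega)
  · exact dg_add_lt (dg_lt_of_le (dg_mul_le h0.le hS.le) (by omega)) (dg_lt_of_le (h1 _ _) (by omega))

/-- constant matrix -/
noncomputable def cst {K : Type} [Field K] : Matrix.SpecialLinearGroup (Fin 2) K →* Matrix.SpecialLinearGroup (Fin 2) K[X] :=
  Matrix.SpecialLinearGroup.map (C : K →+* K[X])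

theorem cst_B {K : Type} [Field K] (g : Matrix.SpecialLinearGroup (Fin 2) K) (h : g 1 0 ≠ 0) :
    IsB (cst g : Matrix (Fin 2) (Fin 2) K[X]) 0 := by
  have : ∀ i j, (cst g : Matrix (Fin 2) (Fin 2) K[X]) i j = C (g i j) := by intro i j; rfl
  refine ⟨?_, fun i j => ?_⟩
  · rw [this, degree_C h]; rfl
  · rw [this]; exact degree_C_le

/-- the conjugate block -/
noncomputable def blk {K : Type} [Field K] (hm hp : ℕ) (g : Matrix.SpecialLinearGroup (Fin 2) K) :
    Matrix.SpecialLinearGroup (Fin 2) K[X] := un (X ^ hm) * cst g * un (X ^ hp)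

theorem pow_block {K : Type} [Field K] (L R : K[X]) (ρ : ℕ) (hρ : 1 ≤ ρ) (hd : (R + L).degree = ρ)
    (M : Matrix.SpecialLinearGroup (Fin 2) K[X]) (hM : IsB (M : Matrix (Fin 2) (Fin 2) K[X]) 0) (n : ℕ) :
    ∃ N : Matrix.SpecialLinearGroup (Fin 2) K[X], IsB (N : Matrix (Fin 2) (Fin 2) K[X]) (n * ρ) ∧
      (un L * M * un R) ^ (n + 1) = un L * N * un R := by
  induction n with
  | zero => exact ⟨M, by simpa using hM, by simp⟩
  | succ n ih =>
    obtain ⟨N, hN, h⟩ := ih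
    refine ⟨M * un (R + L) * N, ?_, ?_⟩
    · have := (hM.mulC (un_C _ ρ hd hρ)).mulB hN
      rw [Matrix.SpecialLinearGroup.coe_mul, Matrix.SpecialLinearGroup.coe_mul]
      convert this using 1
      ring
    · rw [pow_succ', h, un_add]
      simp only [mul_assoc]

theorem dg_pow_add {K : Type} [Field K] (m n : ℕ) (h : m ≠ n) (e f : K) (he : e ≠ 0) (hf : f ≠ 0) :
    (C e * X ^ m + C f * X ^ n : K[X]).degree = (max m n : ℕ) := by
  rcases lt_or_gt_of_ne h with h | h
  · rw [max_eq_right h.le]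
    refine dg_add_eq' ?_ (degree_C_mul_X_pow n hf)
    rw [degree_C_mul_X_pow m he]; exact_mod_cast h
  · rw [max_eq_left h.le]
    refine dg_add_eq (degree_C_mul_X_pow m he) ?_
    rw [degree_C_mul_X_pow n hf]; exact_mod_cast h

/-- `L = ± T^m` -/
def IsMon {K : Type} [Field K] (L : K[X]) (m : ℕ) : Prop := ∃ e : K, e ≠ 0 ∧ L = C e * X ^ m

theorem IsMon.add {K : Type} [Field K] {L R : K[X]} {m n : ℕ} (h : IsMon L m) (h' : IsMon R n) (hmn : m ≠ n) :
    (L + R).degree = (max m n : ℕ) := by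
  obtain ⟨e, he, rfl⟩ := h
  obtain ⟨f, hf, rfl⟩ := h'
  exact dg_pow_add m n hmn e f he hf

theorem isMon_pow {K : Type} [Field K] (m : ℕ) : IsMon (X ^ m : K[X]) m := ⟨1, one_ne_zero, by simp⟩
theorem isMon_neg {K : Type} [Field K] (m : ℕ) : IsMon (-X ^ m : K[X]) m :=
  ⟨-1, neg_ne_zero.2 one_ne_zero, by simp⟩

def lend (hm hp : ℕ) (c : ℤ) : ℕ := if 0 < c then hm else hp

theorem zpow_block {K : Type} [Field K] (hm hp : ℕ) (hne : hm ≠ hp) (g : Matrix.SpecialLinearGroup (Fin 2) K)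
    (hg : g 1 0 ≠ 0) (c : ℤ) (hc : c ≠ 0) :
    ∃ (L R : K[X]) (N : Matrix.SpecialLinearGroup (Fin 2) K[X]), IsMon L (lend hm hp c) ∧ IsMon R (lend hp hm c) ∧
      IsB (N : Matrix (Fin 2) (Fin 2) K[X]) ((c.natAbs - 1) * max hm hp) ∧ (blk hm hp g) ^ c = un L * N * un R := by
  have hmax : 1 ≤ max hm hp := by omega
  obtain ⟨n, hn⟩ : ∃ n, c.natAbs = n + 1 := ⟨c.natAbs - 1, by omega⟩
  by_cases h : 0 < c
  · obtain ⟨N, hN, h1⟩ := pow_block (X ^ hm : K[X]) (X ^ hp) (max hm hp) hmax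
      (by rw [max_comm]; exact (isMon_pow hp).add (isMon_pow hm) hne.symm) (cst g) (cst_B g hg) n
    refine ⟨X ^ hm, X ^ hp, N, ?_, ?_, ?_, ?_⟩
    · simp only [lend, if_pos h]; exact isMon_pow _
    · simp only [lend, if_pos h]; exact isMon_pow _
    · rw [hn]; exact hN
    · rw [← h1, blk]
      have : c = ((n + 1 : ℕ) : ℤ) := by omega
      rw [this, zpow_natCast]
  · have hg' : g⁻¹ 1 0 ≠ 0 := by
      rw [Matrix.SpecialLinearGroup.SL2_inv_expl]
      simpa using hg
    obtain ⟨N, hN, h1⟩ := pow_block (-X ^ hp : K[X]) (-X ^ hm) (max hm hp) hmax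
      ((isMon_neg hm).add (isMon_neg hp) hne) (cst g⁻¹) (cst_B g⁻¹ hg') n
    refine ⟨-X ^ hp, -X ^ hm, N, ?_, ?_, ?_, ?_⟩
    · simp only [lend, if_neg h]; exact isMon_neg _
    · simp only [lend, if_neg h]; exact isMon_neg _
    · rw [hn]; exact hN
    · rw [← h1, un_neg, un_neg, map_inv, blk]
      have : c = -((n + 1 : ℕ) : ℤ) := by omega
      rw [this, _root_.zpow_neg, zpow_natCast, ← inv_pow]
      simp only [_root_.mul_inv_rev, mul_assoc]

theorem tele {G : Type*} [Group G] (k : ℕ) (V : ℕ → G) (Z : Fin k → G) :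
    (List.ofFn fun i : Fin k => V i * Z i * (V (i + 1))⁻¹).prod = V 0 * (List.ofFn Z).prod * (V k)⁻¹ := by
  induction k generalizing V with
  | zero => simp
  | succ k ih =>
    rw [List.ofFn_succ, List.prod_cons, List.ofFn_succ, List.prod_cons]
    have := ih (fun i => V (i + 1)) (fun i => Z i.succ)
    simp only [Fin.val_succ] at this ⊢
    rw [this]
    simp [mul_assoc]

theorem tele_cyc {G : Type*} [Group G] (n : ℕ) (U : Fin (n + 1) → G) (Z : Fin (n + 1) → G) :
    (List.ofFn fun i => U i * Z i * (U (i + 1))⁻¹).prod = U 0 * (List.ofFn Z).prod * (U 0)⁻¹ := by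
  have := tele (n + 1) (fun j => U (Fin.ofNat (n + 1) j)) Z
  have e1 : ∀ i : Fin (n + 1), Fin.ofNat (n + 1) i = i := fun i => by ext; simp [Nat.mod_eq_of_lt i.2]
  have e2 : ∀ i : Fin (n + 1), Fin.ofNat (n + 1) (i + 1) = i + 1 := fun i => by ext; simp [Fin.val_add]
  have e3 : Fin.ofNat (n + 1) 0 = 0 := rfl
  have e4 : Fin.ofNat (n + 1) (n + 1) = 0 := by ext; simp
  simpa only [e1, e2, e3, e4] using this

theorem chainE {K : Type} [Field K] (n : ℕ) (Z : Fin (n + 1) → SL2 K[X]) (D : Fin (n + 1) → ℕ)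
    (h : ∀ i, IsE (Z i : Matrix (Fin 2) (Fin 2) K[X]) (D i)) :
    IsE (((List.ofFn Z).prod : SL2 K[X]) : Matrix (Fin 2) (Fin 2) K[X]) (∑ i, D i) := by
  induction n with
  | zero => simpa using h 0
  | succ n ih =>
    rw [List.ofFn_succ, List.prod_cons, Fin.sum_univ_succ, Matrix.SpecialLinearGroup.coe_mul]
    exact (h 0).mulE (ih _ _ fun i => h i.succ)

theorem trace_conj {R : Type} [CommRing R] (U Z : SL2 R) :
    Matrix.trace ((U * Z * U⁻¹ : SL2 R) : Matrix (Fin 2) (Fin 2) R) = Matrix.trace (Z : Matrix (Fin 2) (Fin 2) R) := by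
  rw [Matrix.SpecialLinearGroup.coe_mul, Matrix.trace_mul_comm, ← Matrix.SpecialLinearGroup.coe_mul, inv_mul_cancel_left]

theorem deg_general {K : Type} [Field K] (n : ℕ) (a b : Fin (n + 1) → ℤ) (ha : ∀ i, a i ≠ 0) (hb : ∀ i, b i ≠ 0)
    (hm hp km kp : ℕ) (h1 : hm ≠ hp) (h2 : km ≠ kp) (h3 : hm ≠ km) (h4 : hm ≠ kp) (h5 : hp ≠ km) (h6 : hp ≠ kp)
    (g g' : SL2 K) (hg : g 1 0 ≠ 0) (hg' : g' 1 0 ≠ 0) :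
    (Matrix.trace ((List.ofFn fun i => blk hm hp g ^ a i * blk km kp g' ^ b i).prod :
      Matrix (Fin 2) (Fin 2) K[X])).natDegree =
    ∑ i, (((a i).natAbs - 1) * max hm hp + max (lend hp hm (a i)) (lend km kp (b i)) +
      (((b i).natAbs - 1) * max km kp + max (lend kp km (b i)) (lend hm hp (a (i + 1))))) := by
  choose L R N hL hR hN hX using fun i => zpow_block hm hp h1 g hg (a i) (ha i)
  choose L' R' N' hL' hR' hN' hY using fun i => zpow_block km kp h2 g' hg' (b i) (hb i)
  have key := tele_cyc n (fun i => (un (L i))⁻¹) (fun i => blk hm hp g ^ a i * blk km kp g' ^ b i)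
  rw [← trace_conj (un (L 0))⁻¹, ← key]
  refine (chainE n _ _ fun i => ?_).trace
  have : (un (L i))⁻¹ * (blk hm hp g ^ a i * blk km kp g' ^ b i) * (un (L (i + 1)))⁻¹⁻¹ =
      (N i * un (R i + L' i)) * (N' i * un (R' i + L (i + 1))) := by
    rw [hX, hY, un_add, un_add, inv_inv]
    simp only [mul_assoc, inv_mul_cancel_left]
  rw [this, Matrix.SpecialLinearGroup.coe_mul, Matrix.SpecialLinearGroup.coe_mul, Matrix.SpecialLinearGroup.coe_mul]
  have d1 : lend hp hm (a i) ≠ lend km kp (b i) := by unfold lend; split_ifs <;> omega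
  have d2 : lend kp km (b i) ≠ lend hm hp (a (i + 1)) := by unfold lend; split_ifs <;> omega
  refine ((hN i).mulC (un_C _ _ ((hR i).add (hL' i) d1) ?_)).mulE ((hN' i).mulC (un_C _ _ ((hR' i).add (hL (i + 1)) d2) ?_)) <;>
    omega

theorem wordEval_wordOf {G : Type*} [Group G] {r : ℕ} (a b : Fin r → ℤ) (x y : G) :
    wordEval (wordOf a b) x y = (List.ofFn fun i => x ^ a i * y ^ b i).prod := by
  simp [wordEval, wordOf, map_list_prod, List.map_ofFn, Function.comp_def]

theorem map_wordEval {G H : Type*} [Group G] [Group H] (f : G →* H) (w : FreeGroup (Fin 2)) (x y : G) :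
    f (wordEval w x y) = wordEval w (f x) (f y) := by
  unfold wordEval
  have : f.comp (FreeGroup.lift ![x, y]) = FreeGroup.lift ![f x, f y] := by
    ext i
    fin_cases i <;> simp
  rw [← this]; rfl

def trW (w : FreeGroup (Fin 2)) (K : Type) [CommRing K] (g : SL2 K × SL2 K) : K :=
  Matrix.trace (wordMap w K g : Matrix (Fin 2) (Fin 2) K)

def HasFam (w : FreeGroup (Fin 2)) (d : ℕ) : Prop :=
  ∀ (K : Type) [Field K], ∃ Φ : K → SL2 K × SL2 K → SL2 K × SL2 K, (∀ τ, Function.Bijective (Φ τ)) ∧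
    ∀ g : SL2 K × SL2 K, g.1 1 0 ≠ 0 → g.2 1 0 ≠ 0 → ∃ F : K[X], F.natDegree = d ∧ ∀ τ, F.eval τ = trW w K (Φ τ g)

theorem HasFam.of_equiv {w w' : FreeGroup (Fin 2)} {d : ℕ} (h : HasFam w' d)
    (H : ∀ (K : Type) [Field K], ∃ β : SL2 K × SL2 K → SL2 K × SL2 K, Function.Bijective β ∧
      ∀ g, trW w K (β g) = trW w' K g) : HasFam w d := by
  intro K _
  obtain ⟨Φ, h1, h2⟩ := h K
  obtain ⟨β, h3, h4⟩ := H K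
  refine ⟨fun τ => β ∘ Φ τ, fun τ => h3.comp (h1 τ), fun g hg hg' => ?_⟩
  obtain ⟨F, hF, h5⟩ := h2 g hg hg'
  exact ⟨F, hF, fun τ => by rw [h5, ← h4]; rfl⟩

theorem fam_blk (w : FreeGroup (Fin 2)) (d hm hp km kp : ℕ)
    (H : ∀ (K : Type) [Field K] (g g' : SL2 K), g 1 0 ≠ 0 → g' 1 0 ≠ 0 →
      (trW w K[X] (blk hm hp g, blk km kp g')).natDegree = d) : HasFam w d := by
  intro K _
  let ε : K → SL2 K[X] →* SL2 K := fun τ => Matrix.SpecialLinearGroup.map (evalRingHom τ)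
  have hε : ∀ τ g, ε τ (cst g) = g := by
    intro τ g
    ext i j
    simp [ε, cst]
  refine ⟨fun τ g => (ε τ (blk hm hp g.1), ε τ (blk km kp g.2)), fun τ => ?_, fun g hg hg' => ?_⟩
  · have : ∀ m p, Function.Bijective fun g : SL2 K => ε τ (blk m p g) := by
      intro m p
      have : (fun g : SL2 K => ε τ (blk m p g)) = fun g => ε τ (un (X ^ m)) * g * ε τ (un (X ^ p)) := by
        funext g
        rw [blk, map_mul, map_mul, hε]
      rw [this]
      exact ((Equiv.mulLeft (ε τ (un (X ^ m)))).trans (Equiv.mulRight (ε τ (un (X ^ p))))).bijective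
    exact (this hm hp).prodMap (this km kp)
  · refine ⟨_, H K g.1 g.2 hg hg', fun τ => ?_⟩
    simp only [trW, wordMap]
    rw [← map_wordEval]
    simp [ε, Matrix.trace_fin_two]

set_option linter.unusedSimpArgs false
theorem fam_gen {n : ℕ} (a b : Fin (n + 1) → ℤ) (ha : ∀ i, a i ≠ 0) (hb : ∀ i, b i ≠ 0)
    (hm hp km kp : ℕ) (h1 : hm ≠ hp) (h2 : km ≠ kp) (h3 : hm ≠ km) (h4 : hm ≠ kp) (h5 : hp ≠ km) (h6 : hp ≠ kp) :
    HasFam (wordOf a b) (∑ i, (((a i).natAbs - 1) * max hm hp + max (lend hp hm (a i)) (lend km kp (b i)) +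
      (((b i).natAbs - 1) * max km kp + max (lend kp km (b i)) (lend hm hp (a (i + 1)))))) := by
  refine fam_blk _ _ hm hp km kp fun K _ g g' hg hg' => ?_
  rw [trW, wordMap, wordEval_wordOf]
  exact deg_general n a b ha hb hm hp km kp h1 h2 h3 h4 h5 h6 g g' hg hg'

theorem fam_one {n : ℕ} (a b : Fin (n + 1) → ℤ) (ha : ∀ i, a i ≠ 0) (hb : ∀ i, b i ≠ 0) (hr : (n + 1).Prime)
    (d : ℕ) (hd : ¬ (n + 1) ∣ d) : ∃ e, e ≠ 0 ∧ HasFam (wordOf a b) e ∧ Nat.Coprime e d := by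
  have hd0 : d ≠ 0 := by rintro rfl; simp at hd
  refine ⟨_, ?_, fam_gen a b ha hb (2 * d + 1) (4 * d) 0 d (by omega) (by omega) (by omega) (by omega) (by omega)
    (by omega), ?_⟩
  all_goals
    have e1 : ∑ i, (((a i).natAbs - 1) * max (2 * d + 1) (4 * d) + max (lend (4 * d) (2 * d + 1) (a i)) (lend 0 d (b i)) +
        (((b i).natAbs - 1) * max 0 d + max (lend d 0 (b i)) (lend (2 * d + 1) (4 * d) (a (i + 1))))) =
        d * (∑ i, (((a i).natAbs - 1) * 4 + ((b i).natAbs - 1) + 6)) + (n + 1) := by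
      have h1 : ∀ i, (((a i).natAbs - 1) * max (2 * d + 1) (4 * d) + max (lend (4 * d) (2 * d + 1) (a i)) (lend 0 d (b i)) +
        (((b i).natAbs - 1) * max 0 d + max (lend d 0 (b i)) (lend (2 * d + 1) (4 * d) (a (i + 1))))) =
          (((a i).natAbs - 1) * (4 * d) + ((b i).natAbs - 1) * d + lend (4 * d) (2 * d + 1) (a i)) +
            lend (2 * d + 1) (4 * d) (a (i + 1)) := by
        intro i
        have m1 : max (2 * d + 1) (4 * d) = 4 * d := by omega
        have m2 : max (lend (4 * d) (2 * d + 1) (a i)) (lend 0 d (b i)) = lend (4 * d) (2 * d + 1) (a i) := by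
          unfold lend; split_ifs <;> omega
        have m3 : max (lend d 0 (b i)) (lend (2 * d + 1) (4 * d) (a (i + 1))) = lend (2 * d + 1) (4 * d) (a (i + 1)) := by
          unfold lend; split_ifs <;> omega
        rw [m1, m2, m3, max_eq_right (Nat.zero_le d)]
        ring
      have h3 : ∑ x : Fin (n + 1), lend (2 * d + 1) (4 * d) (a (x + 1)) = ∑ x, lend (2 * d + 1) (4 * d) (a x) :=
        Equiv.sum_comp (Equiv.addRight (1 : Fin (n + 1))) (fun i => lend (2 * d + 1) (4 * d) (a i))
      rw [Finset.sum_congr rfl fun i _ => h1 i, Finset.sum_add_distrib, h3, ← Finset.sum_add_distrib]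
      have h2 : ∀ i, (((a i).natAbs - 1) * (4 * d) + ((b i).natAbs - 1) * d + lend (4 * d) (2 * d + 1) (a i)) +
            lend (2 * d + 1) (4 * d) (a i) = d * (((a i).natAbs - 1) * 4 + ((b i).natAbs - 1) + 6) + 1 := by
        intro i
        have : lend (4 * d) (2 * d + 1) (a i) + lend (2 * d + 1) (4 * d) (a i) = 6 * d + 1 := by
          unfold lend; split_ifs <;> omega
        rw [add_assoc, this]; ring
      rw [Finset.sum_congr rfl fun i _ => h2 i, Finset.sum_add_distrib, ← Finset.mul_sum]
      simp
    rw [e1]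
  · omega
  · rw [Nat.coprime_mul_left_add_left]
    exact (Nat.Prime.coprime_iff_not_dvd hr).2 hd

/-- cyclic induction -/
theorem cyc_ind {n : ℕ} (P : Fin (n + 1) → Prop) (h : ∀ i, P i → P (i + 1)) (i : Fin (n + 1)) (hi : P i) (j) : P j := by
  have : ∀ k : ℕ, P (i + Fin.ofNat (n + 1) k) := by
    intro k
    induction k with
    | zero => simpa using hi
    | succ k ih =>
      have := h _ ih
      rw [add_assoc] at this
      convert this using 2
      ext; simp [Fin.val_add]
  have h2 := this ((j - i : Fin (n + 1)) : ℕ)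
  have e : Fin.ofNat (n + 1) ((j - i : Fin (n + 1)) : ℕ) = j - i := by
    ext; exact Nat.mod_eq_of_lt (j - i).2
  rw [e, add_sub_cancel] at h2
  exact h2

theorem fam_two {n : ℕ} (a b : Fin (n + 1) → ℤ) (ha : ∀ i, a i ≠ 0) (hb : ∀ i, b i ≠ 0) (hr : (n + 1).Prime)
    (hs : ¬ (((∀ i, 0 < a i) ∨ (∀ i, a i < 0)) ∧ ((∀ i, 0 < b i) ∨ (∀ i, b i < 0)))) :
    ∃ d, HasFam (wordOf a b) d ∧ ¬ (n + 1) ∣ d := by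
  have hr2 := hr.two_le
  refine ⟨_, fam_gen a b ha hb 0 (2 * (n + 1)) (n + 1) 1 (by omega) (by omega) (by omega) (by omega) (by omega)
    (by omega), ?_⟩
  let Q : Fin (n + 1) → Prop := fun i => (a i < 0 ∧ b i < 0) ∨ (0 < b i ∧ 0 < a (i + 1))
  classical
  have h1 : ∀ i, ∃ s, ((a i).natAbs - 1) * max 0 (2 * (n + 1)) + max (lend (2 * (n + 1)) 0 (a i)) (lend (n + 1) 1 (b i)) +
      (((b i).natAbs - 1) * max (n + 1) 1 + max (lend 1 (n + 1) (b i)) (lend 0 (2 * (n + 1)) (a (i + 1)))) =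
      (n + 1) * s + if Q i then 1 else 0 := by
    intro i
    have m1 : max 0 (2 * (n + 1)) = 2 * (n + 1) := by omega
    have m2 : max (n + 1) 1 = n + 1 := by omega
    rw [m1, m2]
    have h0 : ∃ s, max (lend (2 * (n + 1)) 0 (a i)) (lend (n + 1) 1 (b i)) +
      max (lend 1 (n + 1) (b i)) (lend 0 (2 * (n + 1)) (a (i + 1))) = (n + 1) * s + if Q i then 1 else 0 := by
      have := ha i
      have := hb i
      have := ha (i + 1)
      rcases lt_or_gt_of_ne (ha i) with h1 | h1 <;> rcases lt_or_gt_of_ne (hb i) with h2 | h2 <;>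
        rcases lt_or_gt_of_ne (ha (i + 1)) with h3 | h3 <;>
        simp only [lend, Q, h1, h2, h3, not_lt.2 h1.le, not_lt.2 h2.le, not_lt.2 h3.le, if_true, if_false, and_true, true_and,
          and_false, false_and, or_false, false_or, or_true, true_or]
      · exact ⟨2, by omega⟩
      · exact ⟨1, by omega⟩
      · exact ⟨3, by omega⟩
      · exact ⟨1, by omega⟩
      · exact ⟨4, by omega⟩
      · exact ⟨3, by omega⟩
      · exact ⟨4, by omega⟩
      · exact ⟨2, by omega⟩
    obtain ⟨s, hs⟩ := h0
    refine ⟨((a i).natAbs - 1) * 2 + ((b i).natAbs - 1) + s, ?_⟩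
    linear_combination hs
  choose s hs' using h1
  rw [Finset.sum_congr rfl fun i _ => hs' i, Finset.sum_add_distrib, ← Finset.mul_sum, Nat.dvd_add_right (dvd_mul_right _ _),
    Finset.sum_boole]
  intro hdvd
  have hdvd : (n + 1) ∣ (Finset.univ.filter Q).card := by simpa using hdvd
  have hle : (Finset.univ.filter Q).card ≤ n + 1 := by simpa using Finset.card_filter_le Finset.univ Q
  rcases Nat.eq_zero_or_pos (Finset.univ.filter Q).card with h0 | h0
  · have hQ : ∀ i, ¬ Q i := by
      intro i hi
      rw [Finset.card_eq_zero] at h0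
      have : i ∈ Finset.univ.filter Q := by simp [hi]
      rw [h0] at this; simp at this
    by_cases hx : ∃ i, 0 < b i
    · obtain ⟨i, hi⟩ := hx
      have step : ∀ i, 0 < b i → a (i + 1) < 0 ∧ 0 < b (i + 1) := by
        intro i hi
        have q1 := hQ i
        have q2 := hQ (i + 1)
        have := ha (i + 1)
        have := hb (i + 1)
        simp only [Q, not_or, not_and] at q1 q2
        have h1 : a (i + 1) < 0 := by have := q1.2 hi; omega
        have := q2.1 h1
        exact ⟨h1, by omega⟩
      have hall := cyc_ind (fun i => 0 < b i) (fun i h => (step i h).2) i hi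
      refine hs ⟨Or.inr fun j => ?_, Or.inl hall⟩
      have := (step (j - 1) (hall _)).1
      simpa using this
    · push Not at hx
      have hb' : ∀ i, b i < 0 := fun i => lt_of_le_of_ne (hx i) (hb i)
      refine hs ⟨Or.inl fun j => ?_, Or.inr hb'⟩
      have := hQ j
      simp only [Q, not_or, not_and] at this
      have h1 := this.1
      have := ha j
      have := hb' j
      omega
  · have heq : (Finset.univ.filter Q).card = n + 1 := le_antisymm hle (Nat.le_of_dvd h0 hdvd)
    have hQ : ∀ i, Q i := by
      intro i
      have : Finset.univ.filter Q = Finset.univ := Finset.eq_univ_of_card _ (by simpa using heq)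
      have hi : i ∈ Finset.univ.filter Q := by rw [this]; simp
      simpa using hi
    by_cases hx : ∃ i, 0 < b i
    · obtain ⟨i, hi⟩ := hx
      have step : ∀ i, 0 < b i → 0 < a (i + 1) ∧ 0 < b (i + 1) := by
        intro i hi
        have q1 : _ ∨ _ := hQ i
        have q2 : _ ∨ _ := hQ (i + 1)
        omega
      have hall := cyc_ind (fun i => 0 < b i) (fun i h => (step i h).2) i hi
      refine hs ⟨Or.inl fun j => ?_, Or.inl hall⟩
      have := (step (j - 1) (hall _)).1
      simpa using this
    · push Not at hx
      have hb' : ∀ i, b i < 0 := fun i => lt_of_le_of_ne (hx i) (hb i)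
      refine hs ⟨Or.inr fun j => ?_, Or.inr hb'⟩
      have q1 : _ ∨ _ := hQ j
      have := hb' j
      omega

theorem IsE.mulPow {K : Type} [Field K] {M N : SL2 K[X]} {D ρ : ℕ} (h : IsE (M : Matrix (Fin 2) (Fin 2) K[X]) D)
    (hc : IsE (N : Matrix (Fin 2) (Fin 2) K[X]) ρ) (m : ℕ) :
    IsE ((M * N ^ m : SL2 K[X]) : Matrix (Fin 2) (Fin 2) K[X]) (D + m * ρ) := by
  induction m with
  | zero => simpa using h
  | succ m ih =>
    rw [pow_succ, ← mul_assoc, Matrix.SpecialLinearGroup.coe_mul, Nat.succ_mul, ← add_assoc]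
    exact ih.mulE hc

def gap (n : ℕ) (c : ℤ) : ℕ := if c = 0 then 3 * n + 2 else (n + 2) + (c.natAbs - 1) * (n + 1) + (3 * n + 2)

theorem gap_C {K : Type} [Field K] (n : ℕ) (hn : 1 ≤ n) (g : SL2 K) (hg : g 1 0 ≠ 0) (c : ℤ) :
    IsC ((un (X ^ (n + 2)) * blk 0 (n + 1) g ^ c * un (X ^ (3 * n + 2)) : SL2 K[X]) : Matrix (Fin 2) (Fin 2) K[X])
      (gap n c) := by
  by_cases hc : c = 0
  · rw [hc, zpow_zero, mul_one, ← un_add, gap, if_pos rfl]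
    refine un_C _ _ ?_ (by omega)
    rw [(isMon_pow _).add (isMon_pow _) (by omega)]
    congr 1; omega
  · obtain ⟨L, R, N, hL, hR, hN, h⟩ := zpow_block 0 (n + 1) (by omega) g hg c hc
    rw [h, gap, if_neg hc]
    have e : un (X ^ (n + 2)) * (un L * N * un R) * un (X ^ (3 * n + 2)) =
      un (X ^ (n + 2) + L) * N * un (R + X ^ (3 * n + 2)) := by
      simp only [un_add, mul_assoc]
    rw [e]
    rw [max_eq_right (Nat.zero_le _)] at hN
    have l1 : lend 0 (n + 1) c < n + 2 := by unfold lend; split_ifs <;> omega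
    have l2 : lend (n + 1) 0 c < 3 * n + 2 := by unfold lend; split_ifs <;> omega
    refine un_B_un _ _ _ _ _ ?_ (by omega) ?_ (by omega) N hN
    · rw [(isMon_pow _).add hL l1.ne', max_eq_left l1.le]
    · rw [hR.add (isMon_pow _) l2.ne, max_eq_right l2.le]

theorem wordEval_lift {G : Type*} [Group G] (w u v : FreeGroup (Fin 2)) (x y : G) :
    wordEval (FreeGroup.lift ![u, v] w) x y = wordEval w (wordEval u x y) (wordEval v x y) := by
  exact map_wordEval (FreeGroup.lift ![x, y]) w u v

theorem fam_three_pos {n : ℕ} (a b : Fin (n + 1) → ℤ) (ha : ∀ i, a i ≠ 0) (hb : ∀ i, 0 < b i) (hr : (n + 1).Prime)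
    (hs : ¬ ∀ i, a i = a 0) : ∃ d, HasFam (wordOf a b) d ∧ ¬ (n + 1) ∣ d := by
  have hn : 1 ≤ n := by have := hr.two_le; omega
  refine ⟨∑ i, (gap n (a i - a 0) + ((b i).natAbs - 1) * gap n (-a 0)), ?_, ?_⟩
  · let x : FreeGroup (Fin 2) := FreeGroup.of 0
    let y : FreeGroup (Fin 2) := FreeGroup.of 1
    refine HasFam.of_equiv (w' := FreeGroup.lift ![x, y * x ^ (-a 0)] (wordOf a b)) ?_ ?_
    · refine fam_blk _ _ 0 (n + 1) (3 * n + 2) (n + 2) fun K _ g g' hg hg' => ?_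
      set A := blk 0 (n + 1) g with hA
      have e0 : wordEval (FreeGroup.lift ![x, y * x ^ (-a 0)] (wordOf a b)) A (blk (3 * n + 2) (n + 2) g') =
          (List.ofFn fun i => A ^ a i * (blk (3 * n + 2) (n + 2) g' * A ^ (-a 0)) ^ b i).prod := by
        rw [wordEval_lift, wordEval_wordOf]
        simp [wordEval, x, y]
      rw [trW, wordMap, e0]
      have key := tele_cyc n (fun i => cst g' * un (X ^ (n + 2)) * A ^ (-a 0))
        (fun i => A ^ a i * (blk (3 * n + 2) (n + 2) g' * A ^ (-a 0)) ^ b i)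
      rw [← trace_conj (cst g' * un (X ^ (n + 2)) * A ^ (-a 0)), ← key]
      refine (chainE n _ _ fun i => ?_).trace
      obtain ⟨m, hm⟩ : ∃ m : ℕ, b i = (m + 1 : ℕ) := ⟨(b i).natAbs - 1, by have := hb i; omega⟩
      have : cst g' * un (X ^ (n + 2)) * A ^ (-a 0) * (A ^ a i * (blk (3 * n + 2) (n + 2) g' * A ^ (-a 0)) ^ b i) *
          (cst g' * un (X ^ (n + 2)) * A ^ (-a 0))⁻¹ =
          (cst g' * (un (X ^ (n + 2)) * A ^ (a i - a 0) * un (X ^ (3 * n + 2)))) *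
          (cst g' * (un (X ^ (n + 2)) * A ^ (-a 0) * un (X ^ (3 * n + 2)))) ^ m := by
        rw [hm, zpow_natCast, blk]
        set U := cst g' * un (X ^ (n + 2)) * A ^ (-a 0) with hU
        have f1 : un (X ^ (3 * n + 2)) * cst g' * un (X ^ (n + 2)) * A ^ (-a 0) = un (X ^ (3 * n + 2)) * U := by
          simp only [hU, mul_assoc]
        have f2 : cst g' * (un (X ^ (n + 2)) * A ^ (-a 0) * un (X ^ (3 * n + 2))) = U * un (X ^ (3 * n + 2)) := by
          simp only [hU, mul_assoc]
        have f3 : ∀ V : SL2 K[X], (V * U) ^ (m + 1) * U⁻¹ = V * (U * V) ^ m := by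
          intro V
          have : (U * V) ^ m = U * (V * U) ^ m * U⁻¹ := by
            rw [← conj_pow]; simp [mul_assoc]
          rw [this, pow_succ']
          simp only [mul_assoc]
        rw [f1, f2, ← mul_assoc U, mul_assoc (U * A ^ a i), f3, sub_eq_add_neg, add_comm (a i), _root_.zpow_add]
        simp only [hU, mul_assoc]
      rw [this]
      have hm' : (b i).natAbs - 1 = m := by omega
      rw [hm']
      have q : ∀ c, IsE ((cst g' * (un (X ^ (n + 2)) * A ^ c * un (X ^ (3 * n + 2))) : SL2 K[X]) :
          Matrix (Fin 2) (Fin 2) K[X]) (gap n c) := by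
        intro c
        rw [Matrix.SpecialLinearGroup.coe_mul]
        simpa using (cst_B g' hg').mulC (gap_C n hn g hg c)
      exact (q _).mulPow (q _) m
    · intro K _
      refine ⟨fun g => (g.1, g.2 * g.1 ^ (-a 0)), ⟨?_, ?_⟩, fun g => ?_⟩
      · rintro ⟨g1, g2⟩ ⟨h1, h2⟩ h
        simp only [Prod.mk.injEq] at h
        obtain ⟨rfl, h⟩ := h
        simpa using h
      · rintro ⟨g1, g2⟩
        exact ⟨(g1, g2 * g1 ^ (a 0)), by simp⟩
      · rw [trW, trW, wordMap, wordMap, wordEval_lift]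
        simp [wordEval, x, y]
  · classical
    have h1 : ∀ i, ∃ s, gap n (a i - a 0) + ((b i).natAbs - 1) * gap n (-a 0) + (if a i = a 0 then 1 else 0) = (n + 1) * s := by
      intro i
      have g0 : gap n (-a 0) = (n + 1) * (4 + ((-a 0).natAbs - 1)) := by
        rw [gap, if_neg (neg_ne_zero.2 (ha 0))]; ring
      by_cases h : a i = a 0
      · refine ⟨3 + ((b i).natAbs - 1) * (4 + ((-a 0).natAbs - 1)), ?_⟩
        rw [g0, if_pos h, h, sub_self, gap, if_pos rfl]; ring
      · refine ⟨(4 + ((a i - a 0).natAbs - 1)) + ((b i).natAbs - 1) * (4 + ((-a 0).natAbs - 1)), ?_⟩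
        rw [g0, if_neg h, gap, if_neg (sub_ne_zero.2 h)]; ring
    choose s hs' using h1
    have h2 := Finset.sum_congr (rfl : Finset.univ = Finset.univ) fun i _ => hs' i
    rw [Finset.sum_add_distrib, ← Finset.mul_sum, Finset.sum_boole, Nat.cast_id] at h2
    intro hd
    have h3 : (n + 1) ∣ (Finset.univ.filter fun i => a i = a 0).card :=
      (Nat.dvd_add_right hd).1 (h2 ▸ dvd_mul_right _ _)
    have h4 : 0 < (Finset.univ.filter fun i => a i = a 0).card := Finset.card_pos.2 ⟨0, by simp⟩
    have h5 := Nat.le_of_dvd h4 h3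
    apply hs
    intro i
    have : (Finset.univ.filter fun i => a i = a 0) = Finset.univ :=
      Finset.eq_univ_of_card _ (le_antisymm (Finset.card_le_univ _) (by simpa using h5))
    have hi : i ∈ (Finset.univ.filter fun i => a i = a 0) := by rw [this]; simp
    simpa using hi

theorem fam_three {n : ℕ} (a b : Fin (n + 1) → ℤ) (ha : ∀ i, a i ≠ 0) (hb : (∀ i, 0 < b i) ∨ (∀ i, b i < 0))
    (hr : (n + 1).Prime)
    (hs : ¬ ∀ i, a i = a 0) : ∃ d, HasFam (wordOf a b) d ∧ ¬ (n + 1) ∣ d := by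
  rcases hb with hb | hb
  · exact fam_three_pos a b ha hb hr hs
  · obtain ⟨d, h1, h2⟩ := fam_three_pos a (fun i => - b i) ha (fun i => by have := hb i; omega) hr hs
    refine ⟨d, h1.of_equiv fun K _ => ⟨fun g => (g.1, g.2⁻¹), ?_, fun g => ?_⟩, h2⟩
    · exact ((Equiv.refl _).prodCongr (Equiv.inv _)).bijective
    · rw [trW, trW, wordMap, wordMap, wordEval_wordOf, wordEval_wordOf]
      simp

theorem trace_inv2 {R : Type} [CommRing R] (g : SL2 R) :
    Matrix.trace ((g⁻¹ : SL2 R) : Matrix (Fin 2) (Fin 2) R) = Matrix.trace (g : Matrix (Fin 2) (Fin 2) R) := by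
  rw [Matrix.trace_fin_two, Matrix.trace_fin_two, Matrix.SpecialLinearGroup.SL2_inv_expl]
  exact add_comm _ _

theorem fam_three' {n : ℕ} (a b : Fin (n + 1) → ℤ) (hb : ∀ i, b i ≠ 0) (ha : (∀ i, 0 < a i) ∨ (∀ i, a i < 0))
    (hr : (n + 1).Prime)
    (hs : ¬ ∀ i, b i = b 0) : ∃ d, HasFam (wordOf a b) d ∧ ¬ (n + 1) ∣ d := by
  obtain ⟨d, h1, h2⟩ := fam_three (fun i => - b i.rev) (fun i => - a i.rev) (fun i => neg_ne_zero.2 (hb _))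
    (by rcases ha with ha | ha
        · right; intro i; have := ha i.rev; omega
        · left; intro i; have := ha i.rev; omega) hr
    (by intro h
        apply hs
        intro i
        have e1 := h i.rev
        have e2 := h (0 : Fin (n + 1)).rev
        simp only [Fin.rev_rev, neg_inj] at e1 e2
        rw [e1, e2])
  refine ⟨d, h1.of_equiv fun K _ => ⟨Prod.swap, Prod.swap_bijective, fun g => ?_⟩, h2⟩
  rw [trW, trW, wordMap, wordMap, wordEval_wordOf, wordEval_wordOf, ← trace_inv2, List.prod_inv_reverse]
  congr 2
  have : (List.map (fun x => x⁻¹) (List.ofFn fun i => g.swap.1 ^ a i * g.swap.2 ^ b i)).reverse =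
      List.ofFn fun i => g.1 ^ (- b i.rev) * g.2 ^ (- a i.rev) := by
    apply List.ext_getElem
    · simp
    · intro k h1 h2
      have h3 : k < n + 1 := by simpa using h2
      simp only [List.getElem_reverse, List.getElem_map, List.getElem_ofFn, List.length_map, List.length_ofFn,
        _root_.mul_inv_rev, Prod.fst_swap, Prod.snd_swap, _root_.zpow_neg]
      have e : (⟨n + 1 - 1 - k, by omega⟩ : Fin (n + 1)) = Fin.rev ⟨k, h3⟩ := by ext; simp [Fin.rev]
      rw [e]
  rw [this]

theorem fam_main {n : ℕ} (a b : Fin (n + 1) → ℤ) (ha : ∀ i, a i ≠ 0) (hb : ∀ i, b i ≠ 0) (hr : (n + 1).Prime)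
    (hs : ¬ ((∀ i, a i = a 0) ∧ (∀ i, b i = b 0))) :
    ∃ d e, d ≠ 0 ∧ e ≠ 0 ∧ Nat.Coprime d e ∧ HasFam (wordOf a b) d ∧ HasFam (wordOf a b) e := by
  have : ∃ d, HasFam (wordOf a b) d ∧ ¬ (n + 1) ∣ d := by
    by_cases h : (((∀ i, 0 < a i) ∨ (∀ i, a i < 0)) ∧ ((∀ i, 0 < b i) ∨ (∀ i, b i < 0)))
    · rw [not_and_or] at hs
      rcases hs with hs | hs
      · exact fam_three a b ha h.2 hr hs
      · exact fam_three' a b hb h.1 hr hs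
    · exact fam_two a b ha hb hr h
  obtain ⟨d, h1, h2⟩ := this
  obtain ⟨e, h3, h4, h5⟩ := fam_one a b ha hb hr d h2
  exact ⟨e, d, h3, by rintro rfl; simp at h2, h5, h4, h1⟩

theorem wordOf_const {n : ℕ} (a b : Fin (n + 1) → ℤ) (h1 : ∀ i, a i = a 0) (h2 : ∀ i, b i = b 0) :
    wordOf a b = (FreeGroup.of (0 : Fin 2) ^ a 0 * FreeGroup.of (1 : Fin 2) ^ b 0) ^ (n + 1) := by
  unfold wordOf
  have : (fun i : Fin (n + 1) => FreeGroup.of (0 : Fin 2) ^ a i * FreeGroup.of (1 : Fin 2) ^ b i) =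
    fun _ => FreeGroup.of (0 : Fin 2) ^ a 0 * FreeGroup.of (1 : Fin 2) ^ b 0 := by
    funext i; rw [h1 i, h2 i]
  rw [this, List.ofFn_const, List.prod_replicate]

theorem mom_one {Ω K : Type} [Fintype Ω] [Fintype K] [DecidableEq Ω] [DecidableEq K] (φ : Ω → K) (Ψ : K → Ω → Ω)
    (hΨ : ∀ τ, Function.Bijective (Ψ τ)) (E : Finset Ω) (d : ℝ) (c : K) (hd0 : 0 ≤ d)
    (hd : ∀ g ∉ E, ∑ τ, (if φ (Ψ τ g) = c then 1 else 0 : ℝ) ≤ d) :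
    Fintype.card K * ∑ g, (if φ g = c then 1 else 0 : ℝ) ≤ d * Fintype.card Ω + Fintype.card K * E.card := by
  have h1 : ∀ τ, ∑ g, (if φ (Ψ τ g) = c then 1 else 0 : ℝ) = ∑ g, (if φ g = c then 1 else 0 : ℝ) := fun τ =>
    (hΨ τ).sum_comp (fun g => (if φ g = c then 1 else 0 : ℝ))
  calc (Fintype.card K : ℝ) * ∑ g, (if φ g = c then 1 else 0 : ℝ) = ∑ τ, ∑ g, (if φ (Ψ τ g) = c then 1 else 0 : ℝ) := by
        simp only [h1]; simp
    _ = ∑ g, ∑ τ, (if φ (Ψ τ g) = c then 1 else 0 : ℝ) := Finset.sum_comm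
    _ ≤ ∑ g, (d + if g ∈ E then (Fintype.card K : ℝ) else 0) := by
        refine Finset.sum_le_sum fun g _ => ?_
        by_cases hg : g ∈ E
        · rw [if_pos hg]
          have : ∑ τ, (if φ (Ψ τ g) = c then 1 else 0 : ℝ) ≤ ∑ τ : K, 1 := by
            refine Finset.sum_le_sum fun τ _ => ?_
            split_ifs <;> norm_num
          simp only [Finset.sum_const, Finset.card_univ, nsmul_eq_mul, mul_one] at this
          linarith
        · rw [if_neg hg, add_zero]; exact hd g hg
    _ = d * Fintype.card Ω + Fintype.card K * E.card := by
        rw [Finset.sum_add_distrib, ← Finset.sum_filter]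
        simp; ring

theorem mom_two {Ω K : Type} [Fintype Ω] [Fintype K] [DecidableEq Ω] [DecidableEq K] (φ : Ω → K) (Φ Ψ : K → Ω → Ω)
    (hΦ : ∀ τ, Function.Bijective (Φ τ)) (hΨ : ∀ τ, Function.Bijective (Ψ τ)) (E : Finset Ω) (A R : ℝ) (hA0 : 0 ≤ A)
    (hR : ∀ c, ∑ g, (if φ g = c then 1 else 0 : ℝ) ≤ R)
    (hA : ∀ g ∉ E, ∀ g' ∉ E, ∑ τ, ∑ τ', (if φ (Ψ τ' g') = φ (Φ τ g) then 1 else 0 : ℝ) ≤ A) :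
    (Fintype.card K : ℝ) ^ 2 * ∑ c, (∑ g, (if φ g = c then 1 else 0 : ℝ)) ^ 2 ≤
      (Fintype.card Ω : ℝ) ^ 2 * A + 2 * E.card * (Fintype.card K : ℝ) ^ 2 * R := by
  let χ : K → K → ℝ := fun a b => if a = b then 1 else 0
  have hχ0 : ∀ a b, 0 ≤ χ a b := by intro a b; simp only [χ]; split_ifs <;> norm_num
  have hχs : ∀ a b, χ a b = χ b a := by intro a b; simp only [χ, eq_comm]
  let M : Ω → Ω → ℝ := fun g g' => ∑ τ, ∑ τ', χ (φ (Ψ τ' g')) (φ (Φ τ g))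
  have hM0 : ∀ g g', 0 ≤ M g g' := fun g g' => Finset.sum_nonneg fun _ _ => Finset.sum_nonneg fun _ _ => hχ0 _ _
  let nn : K → ℝ := fun c => ∑ g, χ (φ g) c
  have hR : ∀ c, nn c ≤ R := hR
  have hs1 : ∀ τ c, ∑ g, χ (φ (Φ τ g)) c = nn c := fun τ c => (hΦ τ).sum_comp (fun g => χ (φ g) c)
  have hs2 : ∀ τ c, ∑ g, χ (φ (Ψ τ g)) c = nn c := fun τ c => (hΨ τ).sum_comp (fun g => χ (φ g) c)
  have r1 : ∀ g, ∑ g', M g g' = ∑ τ, ∑ τ' : K, nn (φ (Φ τ g)) := by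
    intro g
    simp only [M]
    rw [Finset.sum_comm]
    refine Finset.sum_congr rfl fun τ _ => ?_
    rw [Finset.sum_comm]
    exact Finset.sum_congr rfl fun τ' _ => hs2 _ _
  have r2 : ∀ g', ∑ g, M g g' = ∑ τ : K, ∑ τ', nn (φ (Ψ τ' g')) := by
    intro g
    simp only [M]
    rw [Finset.sum_comm]
    refine Finset.sum_congr rfl fun τ _ => ?_
    rw [Finset.sum_comm]
    refine Finset.sum_congr rfl fun τ' _ => ?_
    rw [← hs1 τ]
    exact Finset.sum_congr rfl fun _ _ => hχs _ _
  have q1 : ∀ g, ∑ g', M g g' ≤ (Fintype.card K : ℝ) ^ 2 * R := by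
    intro g
    rw [r1]
    calc _ ≤ ∑ τ : K, ∑ τ' : K, R := Finset.sum_le_sum fun _ _ => Finset.sum_le_sum fun _ _ => hR _
      _ = _ := by simp; ring
  have q2 : ∀ g', ∑ g, M g g' ≤ (Fintype.card K : ℝ) ^ 2 * R := by
    intro g
    rw [r2]
    calc _ ≤ ∑ τ : K, ∑ τ' : K, R := Finset.sum_le_sum fun _ _ => Finset.sum_le_sum fun _ _ => hR _
      _ = _ := by simp; ring
  have tot : ∑ g, ∑ g', M g g' = (Fintype.card K : ℝ) ^ 2 * ∑ c, nn c ^ 2 := by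
    simp only [r1]
    rw [Finset.sum_comm]
    have : ∀ τ, ∑ g, ∑ τ' : K, nn (φ (Φ τ g)) = Fintype.card K * ∑ c, nn c ^ 2 := by
      intro τ
      rw [Finset.sum_comm]
      have e : ∑ g, nn (φ (Φ τ g)) = ∑ c, nn c ^ 2 := by
        rw [(hΦ τ).sum_comp (fun g => nn (φ g))]
        have : ∀ g, nn (φ g) = ∑ c, χ (φ g) c * nn c := by
          intro g; simp [χ]
        simp only [this]
        rw [Finset.sum_comm]
        refine Finset.sum_congr rfl fun c _ => ?_
        rw [← Finset.sum_mul, sq]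
      simp [e]
    simp only [this]
    simp; ring
  have split : ∀ g g', M g g' ≤ A + (if g ∈ E then M g g' else 0) + (if g' ∈ E then M g g' else 0) := by
    intro g g'
    have := hM0 g g'
    by_cases h1 : g ∈ E <;> by_cases h2 : g' ∈ E <;> simp only [h1, h2, if_true, if_false]
    · linarith
    · linarith
    · linarith
    · rw [add_zero, add_zero]; exact hA g h1 g' h2
  change (Fintype.card K : ℝ) ^ 2 * ∑ c, nn c ^ 2 ≤ _
  rw [← tot]
  calc ∑ g, ∑ g', M g g' ≤ ∑ g, ∑ g', (A + (if g ∈ E then M g g' else 0) + (if g' ∈ E then M g g' else 0)) :=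
        Finset.sum_le_sum fun g _ => Finset.sum_le_sum fun g' _ => split g g'
    _ = (Fintype.card Ω : ℝ) ^ 2 * A + (∑ g ∈ E, ∑ g', M g g') + (∑ g' ∈ E, ∑ g, M g g') := by
        simp only [Finset.sum_add_distrib]
        congr 1
        · congr 1
          · simp; ring
          · rw [← Finset.sum_filter_add_sum_filter_not Finset.univ (fun g => g ∈ E)]
            have z : ∑ x with x ∉ E, ∑ y, (if x ∈ E then M x y else 0) = 0 := by
              refine Finset.sum_eq_zero fun x hx => ?_
              have hx : x ∉ E := by simpa using hx
              simp [hx]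
            rw [z, add_zero]
            simp only [Finset.filter_mem_eq_inter, Finset.univ_inter]
            refine Finset.sum_congr rfl fun x hx => ?_
            simp [hx]
        · rw [Finset.sum_comm, ← Finset.sum_filter_add_sum_filter_not Finset.univ (fun g => g ∈ E)]
          have z : ∑ x with x ∉ E, ∑ y, (if x ∈ E then M y x else 0) = 0 := by
              refine Finset.sum_eq_zero fun x hx => ?_
              have hx : x ∉ E := by simpa using hx
              simp [hx]
          rw [z, add_zero]
          simp only [Finset.filter_mem_eq_inter, Finset.univ_inter]
          refine Finset.sum_congr rfl fun x hx => ?_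
          simp [hx]
    _ ≤ (Fintype.card Ω : ℝ) ^ 2 * A + (∑ g ∈ E, (Fintype.card K : ℝ) ^ 2 * R) + (∑ g' ∈ E, (Fintype.card K : ℝ) ^ 2 * R) := by
        gcongr with g _ g' _
        · exact q1 g
        · exact q2 g'
    _ = _ := by simp; ring

theorem card_SL_T {K : Type} [Field K] [Fintype K] [DecidableEq K] (c : K) :
    ((Finset.univ.filter fun y : SL2 K => Matrix.trace (y : Matrix (Fin 2) (Fin 2) K) = c).card ≤
      Fintype.card K ^ 2 + Fintype.card K) ∧
    Fintype.card K ^ 2 ≤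
    (Finset.univ.filter fun y : SL2 K => Matrix.trace (y : Matrix (Fin 2) (Fin 2) K) = c).card + Fintype.card K := by
  set q := Fintype.card K with hq
  have hq1 : 1 ≤ q := Fintype.card_pos
  set T := (Finset.univ.filter fun y : SL2 K => Matrix.trace (y : Matrix (Fin 2) (Fin 2) K) = c) with hT
  have hmem : ∀ y ∈ T, y 1 1 = c - y 0 0 ∧ y 0 0 * (c - y 0 0) - y 0 1 * y 1 0 = 1 := by
    intro y hy
    simp only [hT, Finset.mem_filter, Finset.mem_univ, true_and, Matrix.trace_fin_two] at hy
    have h1 : y 1 1 = c - y 0 0 := by rw [← hy]; ring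
    have := y.det_coe
    rw [Matrix.det_fin_two, h1] at this
    exact ⟨h1, this⟩
  have hext : ∀ y z : SL2 K, y 0 0 = z 0 0 → y 0 1 = z 0 1 → y 1 0 = z 1 0 → y 1 1 = z 1 1 → y = z := by
    intro y z h1 h2 h3 h4
    ext i j
    fin_cases i <;> fin_cases j <;> assumption
  have hsplit := Finset.card_filter_add_card_filter_not (s := T) (fun y : SL2 K => y 0 1 = 0)
  have hB : (T.filter fun y : SL2 K => y 0 1 = 0).card ≤ 2 * q := by
    have hP : (X ^ 2 - C c * X + C 1 : K[X]).natDegree = 2 := by compute_degree!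
    have hP0 : (X ^ 2 - C c * X + C 1 : K[X]) ≠ 0 := by
      intro h; rw [h] at hP; simp at hP
    have : (T.filter fun y : SL2 K => y 0 1 = 0).card ≤ ((X ^ 2 - C c * X + C 1 : K[X]).roots.toFinset ×ˢ (Finset.univ : Finset K)).card := by
      refine Finset.card_le_card_of_injOn (fun y => (y 0 0, y 1 0)) ?_ ?_
      · intro y hy
        simp only [Finset.coe_filter, Set.mem_ofPred_eq] at hy
        obtain ⟨h1, h2⟩ := hmem y hy.1
        simp only [Finset.coe_product, Set.mem_prod, Finset.mem_coe, Multiset.mem_toFinset, Finset.mem_univ, and_true]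
        rw [mem_roots hP0]
        simp only [IsRoot, eval_add, eval_sub, eval_pow, eval_X, eval_mul, eval_C]
        rw [hy.2] at h2
        linear_combination -h2
      · intro y hy z hz h
        simp only [Finset.coe_filter, Set.mem_ofPred_eq] at hy hz
        simp only [Prod.mk.injEq] at h
        refine hext y z h.1 (by rw [hy.2, hz.2]) h.2 ?_
        rw [(hmem y hy.1).1, (hmem z hz.1).1, h.1]
    refine this.trans ?_
    rw [Finset.card_product]
    refine Nat.mul_le_mul ?_ le_rfl
    exact (Multiset.toFinset_card_le _).trans ((card_roots' _).trans hP.le)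
  have hA1 : (T.filter fun y : SL2 K => ¬ y 0 1 = 0).card ≤ q * (q - 1) := by
    have : (T.filter fun y : SL2 K => ¬ y 0 1 = 0).card ≤ ((Finset.univ : Finset K) ×ˢ ((Finset.univ : Finset K).erase 0)).card := by
      refine Finset.card_le_card_of_injOn (fun y => (y 0 0, y 0 1)) ?_ ?_
      · intro y hy
        simp only [Finset.coe_filter, Set.mem_ofPred_eq] at hy
        simp [hy.2]
      · intro y hy z hz h
        simp only [Finset.coe_filter, Set.mem_ofPred_eq] at hy hz
        simp only [Prod.mk.injEq] at h
        refine hext y z h.1 h.2 ?_ ?_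
        · have h1 := (hmem y hy.1).2
          have h2 := (hmem z hz.1).2
          rw [h.1, h.2] at h1
          exact mul_left_cancel₀ hz.2 (by linear_combination h2 - h1)
        · rw [(hmem y hy.1).1, (hmem z hz.1).1, h.1]
    rw [Finset.card_product, Finset.card_erase_of_mem (Finset.mem_univ _), Finset.card_univ] at this
    exact this
  have hA2 : q * (q - 1) ≤ T.card := by
    have hex : ∀ z : K × K, ∃ y : SL2 K, z.2 ≠ 0 → y 0 0 = z.1 ∧ y 0 1 = z.2 ∧ y 1 1 = c - z.1 := by
      rintro ⟨u, v⟩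
      by_cases hv : v = 0
      · exact ⟨1, fun h => absurd hv h⟩
      · have hdet : (!![u, v; (u * (c - u) - 1) / v, c - u] : Matrix (Fin 2) (Fin 2) K).det = 1 := by
          rw [Matrix.det_fin_two_of, mul_div_cancel₀ _ hv]; ring
        exact ⟨⟨_, hdet⟩, fun _ => ⟨rfl, rfl, rfl⟩⟩
    choose Y hY using hex
    have : ((Finset.univ : Finset K) ×ˢ ((Finset.univ : Finset K).erase 0)).card ≤ T.card := by
      refine Finset.card_le_card_of_injOn Y ?_ ?_
      · rintro ⟨u, v⟩ hz
        have hv : v ≠ 0 := by simpa using hz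
        obtain ⟨h1, h2, h3⟩ := hY (u, v) hv
        rw [Finset.mem_coe, hT, Finset.mem_filter]
        refine ⟨Finset.mem_univ _, ?_⟩
        rw [Matrix.trace_fin_two, h1, h3]
        ring
      · rintro ⟨u, v⟩ hz ⟨u', v'⟩ hz' h
        have hv : v ≠ 0 := by simpa using hz
        have hv' : v' ≠ 0 := by simpa using hz'
        obtain ⟨h1, h2, h3⟩ := hY (u, v) hv
        obtain ⟨h1', h2', h3'⟩ := hY (u', v') hv'
        exact Prod.ext (by rw [← h1, ← h1', h]) (by rw [← h2, ← h2', h])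
    rw [Finset.card_product, Finset.card_erase_of_mem (Finset.mem_univ _), Finset.card_univ] at this
    exact this
  obtain ⟨k, hk⟩ : ∃ k, q = k + 1 := ⟨q - 1, by omega⟩
  clear_value q
  subst hk
  rw [Nat.add_sub_cancel] at hA1 hA2
  constructor <;> nlinarith

theorem quad_rep {K : Type} [Field K] [Fintype K] (h2 : (2 : K) ≠ 0) (u v w : K) (hΔ : v ^ 2 - 4 * u * w ≠ 0) :
    ∃ α β : K, u * α ^ 2 + v * α * β + w * β ^ 2 = 1 := by
  by_cases hu : u = 0
  · have hv : v ≠ 0 := by rintro rfl; simp [hu] at hΔ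
    refine ⟨(1 - w) / v, 1, ?_⟩
    rw [hu]; field_simp; ring
  · have hodd : Fintype.card K % 2 = 1 := by
      have := FiniteField.odd_card_of_char_ne_two (F := K) (by
        intro h
        have : CharP K 2 := h ▸ ringChar.charP K
        exact h2 (by exact_mod_cast CharP.cast_eq_zero K 2))
      simpa using this
    have e1 : (X ^ 2 - C (4 * u) : K[X]).degree = 2 := degree_X_pow_sub_C (by norm_num) _
    have e2 : (C (-(v ^ 2 - 4 * u * w)) * X ^ 2 : K[X]).degree = 2 := degree_C_mul_X_pow 2 (neg_ne_zero.2 hΔ)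
    obtain ⟨x, z, h⟩ := FiniteField.exists_root_sum_quadratic e1 e2 hodd
    simp only [eval_sub, eval_pow, eval_X, eval_C, eval_mul] at h
    refine ⟨(x - v * z) / (2 * u), z, ?_⟩
    have h4 : (4 * u) ≠ 0 := by
      have : (4 : K) = 2 * 2 := by norm_num
      rw [this]; exact mul_ne_zero (mul_ne_zero h2 h2) hu
    apply mul_left_cancel₀ h4
    field_simp
    linear_combination 4 * h

def cmpM {K : Type} [Field K] (c : K) : SL2 K := ⟨!![0, -1; 1, c], by simp⟩

theorem conj_comp {K : Type} [Field K] [Fintype K] (h2 : (2 : K) ≠ 0) (c : K) (hc : c ^ 2 - 4 ≠ 0) (y : SL2 K)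
    (hy : Matrix.trace (y : Matrix (Fin 2) (Fin 2) K) = c) :
    ∃ P : SL2 K, y * P = P * cmpM c := by
  have hdet := y.det_coe
  rw [Matrix.det_fin_two] at hdet
  rw [Matrix.trace_fin_two] at hy
  obtain ⟨α, β, h⟩ := quad_rep h2 (y 1 0) (y 1 1 - y 0 0) (- y 0 1) (by
    intro h; apply hc; rw [← hy]; linear_combination h + 4 * hdet)
  obtain ⟨P, hP⟩ : ∃ P : SL2 K, (P : Matrix (Fin 2) (Fin 2) K) =
      !![α, y 0 0 * α + y 0 1 * β; β, y 1 0 * α + y 1 1 * β] := by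
    refine ⟨⟨!![α, y 0 0 * α + y 0 1 * β; β, y 1 0 * α + y 1 1 * β], ?_⟩, rfl⟩
    rw [Matrix.det_fin_two_of]; linear_combination h
  refine ⟨P, ?_⟩
  have hcm : (cmpM c : Matrix (Fin 2) (Fin 2) K) = !![0, -1; 1, c] := rfl
  · ext i j
    rw [Matrix.SpecialLinearGroup.coe_mul, Matrix.SpecialLinearGroup.coe_mul, hP, hcm]
    fin_cases i <;> fin_cases j <;> simp [Matrix.mul_apply, Fin.sum_univ_two]
    · linear_combination (y 0 0 * α + y 0 1 * β) * hy - α * hdet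
    · linear_combination (y 1 0 * α + y 1 1 * β) * hy - β * hdet

theorem conj_of_trace {K : Type} [Field K] [Fintype K] (h2 : (2 : K) ≠ 0) (c : K) (hc : c ^ 2 - 4 ≠ 0) (y z : SL2 K)
    (hy : Matrix.trace (y : Matrix (Fin 2) (Fin 2) K) = c) (hz : Matrix.trace (z : Matrix (Fin 2) (Fin 2) K) = c) :
    ∃ P : SL2 K, P * y * P⁻¹ = z := by
  obtain ⟨P, hP⟩ := conj_comp h2 c hc y hy
  obtain ⟨Q, hQ⟩ := conj_comp h2 c hc z hz
  refine ⟨Q * P⁻¹, ?_⟩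
  have e1 := eq_mul_inv_of_mul_eq hP
  have e2 := eq_mul_inv_of_mul_eq hQ
  rw [e1, e2]
  simp [mul_assoc]

theorem fibre_card {K : Type} [Field K] [Fintype K] [DecidableEq K] (h2 : (2 : K) ≠ 0) (w : FreeGroup (Fin 2))
    (c : K) (hc : c ^ 2 - 4 ≠ 0) (y : SL2 K) (hy : Matrix.trace (y : Matrix (Fin 2) (Fin 2) K) = c) :
    (Finset.univ.filter fun g : SL2 K × SL2 K => trW w K g = c).card =
      (Finset.univ.filter fun y : SL2 K => Matrix.trace (y : Matrix (Fin 2) (Fin 2) K) = c).card *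
        (Finset.univ.filter fun g : SL2 K × SL2 K => wordMap w K g = y).card := by
  rw [Finset.card_eq_sum_card_fiberwise (f := wordMap w K)
    (t := Finset.univ.filter fun y : SL2 K => Matrix.trace (y : Matrix (Fin 2) (Fin 2) K) = c)
    (by intro g hg; rw [Finset.mem_coe, Finset.mem_filter] at hg ⊢; exact ⟨Finset.mem_univ _, hg.2⟩)]
  rw [Finset.sum_const_nat (m := (Finset.univ.filter fun g : SL2 K × SL2 K => wordMap w K g = y).card)]
  intro z hz
  have hz : Matrix.trace (z : Matrix (Fin 2) (Fin 2) K) = c := by simpa using hz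
  rw [Finset.filter_filter]
  obtain ⟨P, hP⟩ := conj_of_trace h2 c hc z y hz hy
  refine Finset.card_equiv ((MulAut.conj P).toEquiv.prodCongr (MulAut.conj P).toEquiv) ?_
  intro g
  simp only [Finset.mem_filter, Finset.mem_univ, true_and]
  have e : wordMap w K (((MulAut.conj P).toEquiv.prodCongr (MulAut.conj P).toEquiv) g) = P * wordMap w K g * P⁻¹ := by
    have := map_wordEval (MulAut.conj P).toMonoidHom w g.1 g.2
    exact this.symm
  rw [e, ← hP]
  constructor
  · rintro ⟨_, h⟩; rw [h]
  · intro h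
    have h : wordMap w K g = z := by simpa using h
    exact ⟨by rw [trW, h, hz], h⟩

theorem card_SL_bd {K : Type} [Field K] [Fintype K] [DecidableEq K] :
    Fintype.card (SL2 K) ≤ Fintype.card K ^ 3 + Fintype.card K ^ 2 ∧
    Fintype.card K ^ 3 ≤ Fintype.card (SL2 K) + Fintype.card K ^ 2 := by
  have h := Finset.card_eq_sum_card_fiberwise (s := (Finset.univ : Finset (SL2 K)))
    (f := fun y : SL2 K => Matrix.trace (y : Matrix (Fin 2) (Fin 2) K)) (t := Finset.univ) (by intro x _; simp)
  rw [Finset.card_univ] at h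
  set q := Fintype.card K with hq
  constructor
  · rw [h]
    calc _ ≤ ∑ c : K, (q ^ 2 + q) := Finset.sum_le_sum fun c _ => (card_SL_T c).1
      _ = _ := by rw [Finset.sum_const, Finset.card_univ, ← hq, smul_eq_mul]; ring
  · have : ∑ c : K, q ^ 2 ≤ ∑ c : K, ((Finset.univ.filter fun y : SL2 K => Matrix.trace (y : Matrix (Fin 2) (Fin 2) K) = c).card + q) :=
      Finset.sum_le_sum fun c _ => (card_SL_T c).2
    rw [Finset.sum_add_distrib, ← h, Finset.sum_const, Finset.sum_const, Finset.card_univ, ← hq, smul_eq_mul, smul_eq_mul] at this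
    nlinarith

theorem card_bad {K : Type} [Field K] [Fintype K] [DecidableEq K] :
    (Finset.univ.filter fun g : SL2 K × SL2 K => g.1 1 0 = 0 ∨ g.2 1 0 = 0).card ≤
      2 * (Fintype.card K ^ 2 * Fintype.card (SL2 K)) := by
  classical
  set B := Finset.univ.filter fun g : SL2 K => g 1 0 = 0 with hB
  have h1 : B.card ≤ Fintype.card K ^ 2 := by
    have : B.card ≤ (Finset.univ : Finset (K × K)).card := by
      refine Finset.card_le_card_of_injOn (fun y => (y 0 0, y 0 1)) (by intro y _; simp) ?_
      intro y hy z hz h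
      have hy : y 1 0 = 0 := by simpa [hB] using hy
      have hz : z 1 0 = 0 := by simpa [hB] using hz
      simp only [Prod.mk.injEq] at h
      have d1 := y.det_coe
      have d2 := z.det_coe
      rw [Matrix.det_fin_two, hy, mul_zero, sub_zero] at d1
      rw [Matrix.det_fin_two, hz, mul_zero, sub_zero] at d2
      have hne : z 0 0 ≠ 0 := by intro h; rw [h, zero_mul] at d2; exact zero_ne_one d2
      have e : y 1 1 = z 1 1 := mul_left_cancel₀ hne (by rw [d2, ← h.1, d1])
      ext i j
      fin_cases i <;> fin_cases j
      · exact h.1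
      · exact h.2
      · exact hy.trans hz.symm
      · exact e
    rw [Finset.card_univ, Fintype.card_prod] at this
    rwa [sq]
  have h2 : (Finset.univ.filter fun g : SL2 K × SL2 K => g.1 1 0 = 0 ∨ g.2 1 0 = 0) ⊆
      (B ×ˢ Finset.univ) ∪ (Finset.univ ×ˢ B) := by
    intro g hg
    simp only [Finset.mem_filter, Finset.mem_univ, true_and] at hg
    simp only [Finset.mem_union, Finset.mem_product, Finset.mem_univ, and_true, true_and, hB, Finset.mem_filter]
    exact hg
  refine (Finset.card_le_card h2).trans ((Finset.card_union_le _ _).trans ?_)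
  rw [Finset.card_product, Finset.card_product, Finset.card_univ]
  nlinarith [Nat.zero_le (Fintype.card (SL2 K))]

theorem sec_mom {K : Type} [Field K] [Fintype K] [DecidableEq K] (w : FreeGroup (Fin 2)) (d e : ℕ) (hd : d ≠ 0) (he : e ≠ 0)
    (hde : Nat.Coprime d e) (hfd : HasFam w d) (hfe : HasFam w e) (p n μ : ℕ) [Fact p.Prime] [CharP K p]
    (hq : Fintype.card K = p ^ n) (hμ : 2 * μ ≤ n) (hlt : d * e + p ^ μ + 1 < p ^ (n - μ)) :
    (Fintype.card K : ℝ) * ∑ c : K, ((Finset.univ.filter fun g : SL2 K × SL2 K => trW w K g = c).card : ℝ) ^ 2 ≤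
      (Fintype.card (SL2 K × SL2 K) : ℝ) ^ 2 * (1 + (4 * d * e + 8 * e + 36) / (p : ℝ) ^ μ) := by
  classical
  obtain ⟨Φ, hΦ, hΦ'⟩ := hfd K
  obtain ⟨Ψ, hΨ, hΨ'⟩ := hfe K
  set E := Finset.univ.filter fun g : SL2 K × SL2 K => g.1 1 0 = 0 ∨ g.2 1 0 = 0 with hE
  have hEn : ∀ g ∉ E, g.1 1 0 ≠ 0 ∧ g.2 1 0 ≠ 0 := by
    intro g hg
    simpa [hE, not_or] using hg
  have hp := (Fact.out : p.Prime)
  have hq2 : 2 ≤ Fintype.card K := Fintype.one_lt_card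
  set q := Fintype.card K with hqd
  set N := Fintype.card (SL2 K × SL2 K) with hN
  have hq0 : (0 : ℝ) < q := by exact_mod_cast (by omega : 0 < q)
  have hcnt : ∀ c, ((Finset.univ.filter fun g : SL2 K × SL2 K => trW w K g = c).card : ℝ) =
      ∑ g, (if trW w K g = c then 1 else 0 : ℝ) := by
    intro c; rw [Finset.sum_boole]
  have hEq : (q : ℝ) * E.card ≤ 4 * N := by
    have h1 := card_bad (K := K)
    have h2 := (card_SL_bd (K := K)).2
    have h3 : N = Fintype.card (SL2 K) * Fintype.card (SL2 K) := Fintype.card_prod _ _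
    rw [← hE, ← hqd] at h1
    rw [← hqd] at h2
    have h4 : q ^ 3 ≤ 2 * Fintype.card (SL2 K) := by nlinarith [sq_nonneg q]
    have : q * E.card ≤ 4 * N := by
      rw [h3]
      calc q * E.card ≤ q * (2 * (q ^ 2 * Fintype.card (SL2 K))) := Nat.mul_le_mul le_rfl h1
        _ = 2 * (q ^ 3 * Fintype.card (SL2 K)) := by ring
        _ ≤ 2 * (2 * Fintype.card (SL2 K) * Fintype.card (SL2 K)) := by gcongr
        _ = _ := by ring
    exact_mod_cast this
  have hR : ∀ c, ∑ g, (if trW w K g = c then 1 else 0 : ℝ) ≤ (e + 4) * N / q := by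
    intro c
    have h1 := mom_one (trW w K) Ψ hΨ E e c (by positivity) (by
      intro g hg
      obtain ⟨F, hF, hF'⟩ := hΨ' g (hEn g hg).1 (hEn g hg).2
      rw [Finset.sum_boole]
      have hF0 : F - C c ≠ 0 := by
        intro h
        have : (F - C c).natDegree = e := by rw [natDegree_sub_C, hF]
        rw [h, natDegree_zero] at this
        exact he this.symm
      have hsub : (Finset.univ.filter fun τ => trW w K (Ψ τ g) = c) ⊆ (F - C c).roots.toFinset := by
        intro τ hτ
        simp only [Finset.mem_filter, Finset.mem_univ, true_and] at hτ
        rw [Multiset.mem_toFinset, mem_roots hF0, IsRoot, eval_sub, eval_C, hF', hτ, sub_self]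
      have := (Finset.card_le_card hsub).trans ((Multiset.toFinset_card_le _).trans (card_roots' _))
      rw [natDegree_sub_C, hF] at this
      exact_mod_cast this)
    rw [le_div_iff₀ hq0]
    rw [← hqd, ← hN] at h1
    linarith
  set A : ℝ := (p : ℝ) ^ n + (p : ℝ) ^ (n - μ) * (2 * (d * e) + 1) + (p : ℝ) ^ μ + 2 * (d * e) + 2 with hA
  have hmain := mom_two (trW w K) Φ Ψ hΦ hΨ E A ((e + 4) * N / q) (by positivity) hR (by
    intro g hg g' hg'
    obtain ⟨F, hF, hF'⟩ := hΦ' g (hEn g hg).1 (hEn g hg).2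
    obtain ⟨G, hG, hG'⟩ := hΨ' g' (hEn g' hg').1 (hEn g' hg').2
    have h1 := st_count F G d e hF hG hd he hde p n μ (by rw [Nat.card_eq_fintype_card]; exact hq) (by omega) hlt
    rw [← Fintype.sum_prod_type', Finset.sum_boole]
    have h2 : (Finset.univ.filter fun x : K × K => trW w K (Ψ x.2 g') = trW w K (Φ x.1 g)).card =
        Nat.card {P : K × K // F.eval P.1 = G.eval P.2} := by
      rw [Nat.card_eq_fintype_card, Fintype.card_subtype]
      congr 1
      ext x
      simp only [Finset.mem_filter, Finset.mem_univ, true_and]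
      rw [← hF', ← hG', eq_comm]
    rw [h2, hA]
    exact_mod_cast h1)
  simp only [hcnt]
  set S := ∑ c : K, (∑ g, (if trW w K g = c then 1 else 0 : ℝ)) ^ 2 with hS
  rw [← hqd, ← hN] at hmain
  have hpow : (1 : ℝ) ≤ (p : ℝ) ^ μ := one_le_pow₀ (by exact_mod_cast hp.one_lt.le)
  have hv0 : (0 : ℝ) < (p : ℝ) ^ μ := by linarith
  have hqr : (q : ℝ) = (p : ℝ) ^ n := by rw [hq]; push_cast; rfl
  have hsp : (p : ℝ) ^ (n - μ) = q / (p : ℝ) ^ μ := by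
    rw [eq_div_iff hv0.ne', hqr, ← pow_add]; congr 1; omega
  have hvv : (p : ℝ) ^ μ ≤ q / (p : ℝ) ^ μ := by
    rw [← hsp]; exact pow_le_pow_right₀ (by exact_mod_cast hp.one_lt.le) (by omega)
  have h1v : (1 : ℝ) ≤ q / (p : ℝ) ^ μ := hpow.trans hvv
  set t : ℝ := q / (p : ℝ) ^ μ with ht
  have hAle : A ≤ q + t * (4 * d * e + 4) := by
    rw [hA, ← hqr, hsp]
    have : (0 : ℝ) ≤ (d * e) := by positivity
    nlinarith
  have h5 : 2 * (E.card : ℝ) * (q : ℝ) ^ 2 * ((e + 4) * N / q) ≤ 8 * (e + 4) * N ^ 2 := by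
    have : 2 * (E.card : ℝ) * (q : ℝ) ^ 2 * ((e + 4) * N / q) = (q * E.card) * (2 * ((e + 4) * N)) := by
      field_simp
    rw [this]
    calc _ ≤ (4 * (N : ℝ)) * (2 * ((e + 4) * N)) := by gcongr
      _ = _ := by ring
  have h6 : (q : ℝ) * (q * S) ≤ q * (N ^ 2 * (1 + (4 * d * e + 8 * e + 36) / (p : ℝ) ^ μ)) := by
    have e1 : q * ((N : ℝ) ^ 2 * (1 + (4 * d * e + 8 * e + 36) / (p : ℝ) ^ μ)) =
      N ^ 2 * (q + t * (4 * d * e + 8 * e + 36)) := by rw [ht]; ring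
    rw [e1]
    calc (q : ℝ) * (q * S) = q ^ 2 * S := by ring
      _ ≤ _ := hmain
      _ ≤ N ^ 2 * (q + t * (4 * d * e + 4)) + 8 * (e + 4) * N ^ 2 := by gcongr
      _ = N ^ 2 * (q + t * (4 * d * e + 4) + 1 * (8 * e + 32)) := by ring
      _ ≤ N ^ 2 * (q + t * (4 * d * e + 4) + t * (8 * e + 32)) := by gcongr
      _ = _ := by ring
  exact le_of_mul_le_mul_left h6 hq0

theorem equi_of_mom {K : Type} [Field K] [Fintype K] [DecidableEq K] (h2 : (2 : K) ≠ 0) (w : FreeGroup (Fin 2)) (κ δ : ℝ)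
    (hδ : 0 < δ) (hδ1 : δ ≤ 1)
    (hS : (Fintype.card K : ℝ) * ∑ c : K, ((Finset.univ.filter fun g : SL2 K × SL2 K => trW w K g = c).card : ℝ) ^ 2 ≤
      (Fintype.card (SL2 K × SL2 K) : ℝ) ^ 2 * (1 + κ))
    (hn1 : (κ * Fintype.card K / (δ / 2) ^ 2 + 2) * ((Fintype.card K : ℝ) ^ 2 + Fintype.card K) <
      δ * ((Fintype.card K : ℝ) ^ 3 - (Fintype.card K : ℝ) ^ 2))
    (hn2 : (1 + δ / 2) * ((Fintype.card K : ℝ) + 1) < (1 + δ) * (Fintype.card K - 1))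
    (hn3 : (1 - δ) * ((Fintype.card K : ℝ) + 1) < (1 - δ / 2) * (Fintype.card K - 1)) :
    IsEquidistributed (wordMap w K) δ := by
  classical
  have hq2 : 2 ≤ Fintype.card K := Fintype.one_lt_card
  have hGb := card_SL_bd (K := K)
  have hTb := card_SL_T (K := K)
  have hNG : (Fintype.card (SL2 K × SL2 K) : ℝ) = (Fintype.card (SL2 K) : ℝ) ^ 2 := by
    rw [Fintype.card_prod]; push_cast; ring
  have hsum : ∑ c : K, ((Finset.univ.filter fun g : SL2 K × SL2 K => trW w K g = c).card : ℝ) =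
      Fintype.card (SL2 K × SL2 K) := by
    rw [← Finset.card_univ, Finset.card_eq_sum_card_fiberwise (f := trW w K) (t := Finset.univ) (by intro x _; simp)]
    push_cast; rfl
  have hfib := fibre_card h2 w
  set n : K → ℝ := fun c => ((Finset.univ.filter fun g : SL2 K × SL2 K => trW w K g = c).card : ℝ) with hn
  set q : ℝ := ((Fintype.card K : ℕ) : ℝ) with hq
  set G : ℝ := ((Fintype.card (SL2 K) : ℕ) : ℝ) with hG
  set N : ℝ := ((Fintype.card (SL2 K × SL2 K) : ℕ) : ℝ) with hN
  have hq2 : 2 ≤ q := by rw [hq]; exact_mod_cast hq2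
  have hG1 : G ≤ q ^ 3 + q ^ 2 := by rw [hG, hq]; exact_mod_cast hGb.1
  have hG2 : q ^ 3 ≤ G + q ^ 2 := by rw [hG, hq]; exact_mod_cast hGb.2
  have hGl : q ^ 2 * (q - 1) ≤ G := by linarith
  have hG0 : 0 < G := lt_of_lt_of_le (by have : 0 < q - 1 := by linarith
                                         positivity) hGl
  have hN0 : 0 < N := by rw [hNG]; positivity
  have hvar : ∑ c : K, (n c - N / q) ^ 2 ≤ κ * N ^ 2 / q := by
    have e : ∑ c : K, (n c - N / q) ^ 2 = ∑ c : K, n c ^ 2 - N ^ 2 / q := by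
      have : ∀ c, (n c - N / q) ^ 2 = n c ^ 2 - 2 * (N / q) * n c + (N / q) ^ 2 := by intro c; ring
      simp only [this]
      rw [Finset.sum_add_distrib, Finset.sum_sub_distrib, ← Finset.mul_sum, hsum, Finset.sum_const, Finset.card_univ,
        nsmul_eq_mul, ← hq]
      field_simp; ring
    rw [e, sub_le_iff_le_add, ← add_div, le_div_iff₀ (by linarith)]
    linarith
  set Bc := Finset.univ.filter fun c : K => δ / 2 * (N / q) ≤ |n c - N / q| with hBc
  have hB : (Bc.card : ℝ) ≤ κ * q / (δ / 2) ^ 2 := by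
    have h1 : ∑ c ∈ Bc, (δ / 2 * (N / q)) ^ 2 ≤ κ * N ^ 2 / q := by
      refine le_trans ?_ hvar
      refine le_trans (Finset.sum_le_sum (g := fun c => (n c - N / q) ^ 2) fun c hc => ?_)
        (Finset.sum_le_sum_of_subset_of_nonneg (Finset.subset_univ _) fun _ _ _ => sq_nonneg _)
      have hc : δ / 2 * (N / q) ≤ |n c - N / q| := by simpa [hBc] using hc
      rw [← sq_abs (n c - N / q)]
      gcongr
    rw [Finset.sum_const, nsmul_eq_mul] at h1
    rw [le_div_iff₀ (by positivity)]
    have e : (Bc.card : ℝ) * (δ / 2 * (N / q)) ^ 2 = (Bc.card * (δ / 2) ^ 2) * (N ^ 2 / q ^ 2) := by ring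
    have e' : κ * N ^ 2 / q = (κ * q) * (N ^ 2 / q ^ 2) := by field_simp
    rw [e, e'] at h1
    exact le_of_mul_le_mul_right h1 (by positivity)
  set D := Bc ∪ {2, -2} with hD
  have hDc : (D.card : ℝ) ≤ κ * q / (δ / 2) ^ 2 + 2 := by
    have : D.card ≤ Bc.card + 2 := (Finset.card_union_le _ _).trans (by
      have := Finset.card_le_two (a := (2 : K)) (b := -2); omega)
    have : (D.card : ℝ) ≤ Bc.card + 2 := by exact_mod_cast this
    linarith
  set Bad := Finset.univ.filter fun y : SL2 K => Matrix.trace (y : Matrix (Fin 2) (Fin 2) K) ∈ D with hBad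
  have hBadc : (Bad.card : ℝ) ≤ D.card * (q ^ 2 + q) := by
    have h1 : Bad.card ≤ ∑ c ∈ D, (Fintype.card K ^ 2 + Fintype.card K) := by
      rw [Finset.card_eq_sum_card_fiberwise (s := Bad) (t := D)
        (f := fun y : SL2 K => Matrix.trace (y : Matrix (Fin 2) (Fin 2) K)) (by
          intro y hy; rw [Finset.mem_coe, hBad, Finset.mem_filter] at hy; exact hy.2)]
      refine Finset.sum_le_sum fun c _ => ?_
      refine le_trans (Finset.card_le_card ?_) (hTb c).1
      exact Finset.filter_subset_filter _ (Finset.subset_univ _)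
    rw [Finset.sum_const, smul_eq_mul] at h1
    rw [hq]
    exact_mod_cast h1
  refine ⟨((Badᶜ : Finset (SL2 K)) : Set (SL2 K)), ?_, ?_⟩
  · have e1 : Nat.card ((Badᶜ : Finset (SL2 K)) : Set (SL2 K)) = (Badᶜ).card := by
      rw [Nat.card_coe_set_eq, Set.ncard_coe_finset]
    have e2 : Bad.card + (Badᶜ).card = Fintype.card (SL2 K) := Finset.card_add_card_compl Bad
    have e3 : (Bad.card : ℝ) + (Badᶜ).card = G := by rw [hG]; exact_mod_cast e2
    rw [e1, Nat.card_eq_fintype_card, ← hG]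
    have : (Bad.card : ℝ) < δ * G := by
      calc (Bad.card : ℝ) ≤ D.card * (q ^ 2 + q) := hBadc
        _ ≤ (κ * q / (δ / 2) ^ 2 + 2) * (q ^ 2 + q) := by gcongr
        _ < δ * (q ^ 3 - q ^ 2) := hn1
        _ ≤ δ * G := by gcongr; linarith
    linarith
  · intro y hy
    set c := Matrix.trace (y : Matrix (Fin 2) (Fin 2) K) with hc
    have hcD : c ∉ D := by
      rw [Finset.mem_coe, Finset.mem_compl, hBad, Finset.mem_filter] at hy
      exact fun h => hy ⟨Finset.mem_univ _, h⟩
    rw [hD, Finset.mem_union, not_or, Finset.mem_insert, Finset.mem_singleton, not_or] at hcD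
    obtain ⟨hcB, hc2, hc2'⟩ := hcD
    have hc4 : c ^ 2 - 4 ≠ 0 := by
      intro h
      have : (c - 2) * (c + 2) = 0 := by linear_combination h
      rcases mul_eq_zero.1 this with h | h
      · exact hc2 (sub_eq_zero.1 h)
      · exact hc2' (eq_neg_of_add_eq_zero_left h)
    have hcn : |n c - N / q| < δ / 2 * (N / q) := by
      rw [hBc, Finset.mem_filter] at hcB
      by_contra h
      exact hcB ⟨Finset.mem_univ _, not_lt.1 h⟩
    have hf := hfib c hc4 y rfl
    rw [Nat.card_eq_fintype_card (α := SL2 K), Nat.card_eq_fintype_card (α := SL2 K × SL2 K), ← hG, ← hN,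
      Nat.card_eq_fintype_card, Fintype.card_subtype]
    set f := (Finset.univ.filter fun g : SL2 K × SL2 K => wordMap w K g = y).card with hfd
    have hT := hTb c
    set T := (Finset.univ.filter fun y : SL2 K => Matrix.trace (y : Matrix (Fin 2) (Fin 2) K) = c).card with hTd
    have hf' : n c = (T : ℝ) * f := by simp only [hn]; exact_mod_cast hf
    have hT1 : (T : ℝ) ≤ q * (q + 1) := by
      have : (T : ℝ) ≤ q ^ 2 + q := by rw [hq]; exact_mod_cast hT.1
      linarith
    have hT2 : q * (q - 1) ≤ (T : ℝ) := by
      have : q ^ 2 ≤ (T : ℝ) + q := by rw [hq]; exact_mod_cast hT.2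
      linarith
    have hT0 : (0 : ℝ) < T := lt_of_lt_of_le (by have : 0 < q - 1 := by linarith
                                                 positivity) hT2
    rw [hf', hNG] at hcn
    rw [hNG]
    have eG : G ^ 2 / G = G := by field_simp
    rw [mul_div_assoc, eG]
    rw [abs_lt] at hcn ⊢
    have g1 : G ^ 2 / q ≤ G * (q * (q + 1)) := by
      rw [div_le_iff₀ (by linarith)]
      calc G ^ 2 = G * G := by ring
        _ ≤ G * (q ^ 3 + q ^ 2) := by gcongr
        _ = _ := by ring
    have g2 : G * (q * (q - 1)) ≤ G ^ 2 / q := by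
      rw [le_div_iff₀ (by linarith)]
      calc G * (q * (q - 1)) * q = G * (q ^ 2 * (q - 1)) := by ring
        _ ≤ G * G := by gcongr
        _ = _ := by ring
    have hGq : 0 < G * q := by positivity
    constructor
    · have : (T : ℝ) * ((1 - δ) * G) < T * f := by
        calc (T : ℝ) * ((1 - δ) * G) ≤ (q * (q + 1)) * ((1 - δ) * G) := by
              have : 0 ≤ 1 - δ := by linarith
              gcongr
          _ = (G * q) * ((1 - δ) * (q + 1)) := by ring
          _ < (G * q) * ((1 - δ / 2) * (q - 1)) := by gcongr
          _ = (1 - δ / 2) * (G * (q * (q - 1))) := by ring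
          _ ≤ (1 - δ / 2) * (G ^ 2 / q) := by
              have : 0 ≤ 1 - δ / 2 := by linarith
              gcongr
          _ < T * f := by linarith [hcn.1]
      have := lt_of_mul_lt_mul_left this hT0.le
      linarith
    · have : (T : ℝ) * f < T * ((1 + δ) * G) := by
        calc (T : ℝ) * f < (1 + δ / 2) * (G ^ 2 / q) := by linarith [hcn.2]
          _ ≤ (1 + δ / 2) * (G * (q * (q + 1))) := by gcongr
          _ = (G * q) * ((1 + δ / 2) * (q + 1)) := by ring
          _ < (G * q) * ((1 + δ) * (q - 1)) := by gcongr
          _ = (q * (q - 1)) * ((1 + δ) * G) := by ring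
          _ ≤ T * ((1 + δ) * G) := by gcongr
      have := lt_of_mul_lt_mul_left this hT0.le
      linarith

theorem equi_mono {X Y : Type*} {f : X → Y} {δ ε : ℝ} (h : IsEquidistributed f δ) (hle : δ ≤ ε) : IsEquidistributed f ε := by
  obtain ⟨Y', h1, h2⟩ := h
  refine ⟨Y', lt_of_le_of_lt ?_ h1, fun y hy => lt_of_lt_of_le (h2 y hy) ?_⟩
  · gcongr
  · gcongr

theorem eps_exists (P : ℕ → ℝ → Prop) (h : ∀ δ : ℝ, 0 < δ → δ ≤ 1 → ∀ᶠ n in Filter.atTop, P n δ)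
    (hm : ∀ n δ ε, P n δ → δ ≤ ε → P n ε) :
    ∃ ε : ℕ → ℝ, Filter.Tendsto ε Filter.atTop (nhds 0) ∧ ∀ᶠ n in Filter.atTop, P n (ε n) := by
  let V : ℕ → Set ℝ := fun n => {δ | 0 < δ ∧ P n δ}
  have hbd : ∀ n, BddBelow (V n) := fun n => ⟨0, fun x hx => hx.1.le⟩
  have h0 : ∀ n, 0 ≤ sInf (V n) := fun n => Real.sInf_nonneg fun x hx => hx.1.le
  refine ⟨fun n => sInf (V n) + 1 / (n + 1), ?_, ?_⟩
  · have t1 : Filter.Tendsto (fun n => sInf (V n)) Filter.atTop (nhds 0) := by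
      rw [Metric.tendsto_atTop]
      intro ε hε
      obtain ⟨M, hM⟩ := Filter.eventually_atTop.1 (h (min (ε / 2) 1) (by positivity) (min_le_right _ _))
      refine ⟨M, fun n hn => ?_⟩
      rw [Real.dist_eq, sub_zero, abs_of_nonneg (h0 n)]
      have : sInf (V n) ≤ min (ε / 2) 1 := csInf_le (hbd n) ⟨by positivity, hM n hn⟩
      have := this.trans (min_le_left _ _)
      linarith
    simpa using t1.add tendsto_one_div_add_atTop_nhds_zero_nat
  · filter_upwards [h 1 one_pos le_rfl] with n hn
    have hne : (V n).Nonempty := ⟨1, one_pos, hn⟩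
    obtain ⟨x, hx, hlt⟩ := exists_lt_of_csInf_lt hne (lt_add_of_pos_right (sInf (V n)) (by positivity : (0 : ℝ) < 1 / (n + 1)))
    exact hm n x _ hx.2 hlt.le

theorem p_equi (w : FreeGroup (Fin 2)) (d e : ℕ) (hd : d ≠ 0) (he : e ≠ 0)
    (hde : Nat.Coprime d e) (hfd : HasFam w d) (hfe : HasFam w e) (p : ℕ) (hp : p.Prime) (hp2 : 2 < p) :
    IsPEquidistributed w p hp := by
  haveI : Fact p.Prime := ⟨hp⟩
  have key : ∀ δ : ℝ, 0 < δ → δ ≤ 1 → ∀ᶠ n : ℕ in Filter.atTop, IsEquidistributed (wordMap w (GaloisField p n)) δ := by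
    intro δ hδ hδ1
    have hp1 : (1 : ℝ) < p := by exact_mod_cast hp.one_lt
    have tdiv : Filter.Tendsto (fun n : ℕ => n / 3) Filter.atTop Filter.atTop :=
      Filter.tendsto_atTop_atTop.2 fun b => ⟨3 * b, fun n hn => by omega⟩
    have tv : Filter.Tendsto (fun n : ℕ => (p : ℝ) ^ (n / 3)) Filter.atTop Filter.atTop :=
      (tendsto_pow_atTop_atTop_of_one_lt hp1).comp tdiv
    set Cst : ℝ := 4 * d * e + 8 * e + 36 with hC
    have hC0 : 0 < Cst := by positivity
    filter_upwards [tv.eventually_ge_atTop (d * e + 3), tv.eventually_gt_atTop (4 * (4 * Cst / δ ^ 2 + 2) / δ),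
      tv.eventually_gt_atTop (4 / δ + 3), Filter.eventually_ge_atTop 1] with n hn1 hn2 hn3 hn0
    letI : Fintype (GaloisField p n) := Fintype.ofFinite _
    classical
    have hcard : Fintype.card (GaloisField p n) = p ^ n := by
      rw [← Nat.card_eq_fintype_card]; exact GaloisField.card p n (by omega)
    set v : ℝ := (p : ℝ) ^ (n / 3) with hv
    have hn1' : d * e + 3 ≤ p ^ (n / 3) := by
      have : ((d * e + 3 : ℕ) : ℝ) ≤ ((p ^ (n / 3) : ℕ) : ℝ) := by push_cast; exact hn1
      exact_mod_cast this
    have hlt : d * e + p ^ (n / 3) + 1 < p ^ (n - n / 3) := by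
      have h1 : p ^ (n / 3) * p ^ (n / 3) ≤ p ^ (n - n / 3) := by
        rw [← pow_add]; exact Nat.pow_le_pow_right hp.pos (by omega)
      nlinarith
    have hmom := sec_mom (K := GaloisField p n) w d e hd he hde hfd hfe p n (n / 3) hcard (by omega) hlt
    rw [← hC, ← hv] at hmom
    have h2 : (2 : GaloisField p n) ≠ 0 := by
      intro h
      have h' : ((2 : ℕ) : GaloisField p n) = 0 := by exact_mod_cast h
      rw [CharP.cast_eq_zero_iff (GaloisField p n) p] at h'
      exact absurd (Nat.le_of_dvd two_pos h') (by omega)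
    have hv0 : 0 < v := by positivity
    have hqv : v ≤ (Fintype.card (GaloisField p n) : ℝ) := by
      rw [hcard]; push_cast
      exact pow_le_pow_right₀ hp1.le (Nat.div_le_self n 3)
    refine equi_of_mom h2 w (Cst / v) δ hδ hδ1 hmom ?_ ?_ ?_
    all_goals generalize (Fintype.card (GaloisField p n) : ℝ) = q at hqv ⊢
    · have hq3 : 3 < q := by
        have : 0 < 4 / δ := by positivity
        linarith
      have e1 : Cst / v * q / (δ / 2) ^ 2 + 2 ≤ (4 * Cst / δ ^ 2 + 2) * (q / v) := by
        have : 1 ≤ q / v := by rw [le_div_iff₀ hv0]; linarith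
        have e : Cst / v * q / (δ / 2) ^ 2 = (4 * Cst / δ ^ 2) * (q / v) := by field_simp; ring
        rw [e, add_mul]; linarith
      have e2 : (4 * Cst / δ ^ 2 + 2) < δ * v / 4 := by
        rw [div_lt_iff₀ hδ] at hn2
        linarith
      calc _ ≤ (4 * Cst / δ ^ 2 + 2) * (q / v) * (q ^ 2 + q) := by gcongr
        _ < δ * v / 4 * (q / v) * (q ^ 2 + q) := by gcongr
        _ = δ * (q * (q ^ 2 + q) / 4) := by field_simp
        _ ≤ _ := by
          gcongr
          nlinarith [sq_nonneg q, mul_nonneg (sq_nonneg q) (by linarith : 0 ≤ q - 3)]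
    · have : 4 < δ * (q - 3) := by
        have h := lt_of_lt_of_le hn3 hqv
        have : 4 / δ < q - 3 := by linarith
        rw [div_lt_iff₀ hδ] at this; linarith
      nlinarith
    · have : 4 < δ * (q - 3) := by
        have h := lt_of_lt_of_le hn3 hqv
        have : 4 / δ < q - 3 := by linarith
        rw [div_lt_iff₀ hδ] at this; linarith
      nlinarith
  obtain ⟨ε, h1, h2⟩ := eps_exists (fun n δ => IsEquidistributed (wordMap w (GaloisField p n)) δ) key
    (fun n δ ε h hle => equi_mono h hle)
  refine ⟨fun m => ε (Nat.log p m), ?_, ?_⟩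
  · simpa only [Nat.log_pow hp.one_lt] using h1
  · simpa only [Nat.log_pow hp.one_lt] using h2

theorem power_word_of_not_p_equidistributed {r : ℕ} (hr : r.Prime)
    (a b : Fin r → ℤ) (hab : ∀ i, a i ≠ 0 ∧ b i ≠ 0)
    (p : ℕ) (hp : p.Prime) (hpr : r < p)
    (hne : ¬ IsPEquidistributed (wordOf a b) p hp) :
    ∃ α β : ℤ, α ≠ 0 ∧ β ≠ 0 ∧
      wordOf a b = (FreeGroup.of (0 : Fin 2) ^ α * FreeGroup.of (1 : Fin 2) ^ β) ^ r := by
  obtain ⟨n, rfl⟩ : ∃ n, r = n + 1 := ⟨r - 1, by have := hr.two_le; omega⟩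
  by_cases hs : (∀ i, a i = a 0) ∧ (∀ i, b i = b 0)
  · exact ⟨a 0, b 0, (hab 0).1, (hab 0).2, wordOf_const a b hs.1 hs.2⟩
  · obtain ⟨d, e, hd, he, hde, hfd, hfe⟩ :=
      fam_main a b (fun i => (hab i).1) (fun i => (hab i).2) hr hs
    exact absurd (p_equi (wordOf a b) d e hd he hde hfd hfe p hp (by have := hr.two_le; omega)) hne
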